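/- arXiv:2502.04614 — 2 statements merged into one kernel-verified Lean document; each statement's English description precedes it below -/
import Mathlib

section
/- The space H¹_κ satisfies the algebra bound with κ-gain: there is a universal constant C such that for all κ ≥ 1 and all f, g ∈ H¹(ℝ), ‖fg‖_{H¹_κ} ≤ C κ^{-1/2} ‖f‖_{H¹_κ} ‖g‖_{H¹_κ}. -/
/-!
Write `w ξ = ξ ^ 2 + 4 κ ^ 2`, `F = fHat f`, `G = fHat g`. Finiteness of `∫ |F|² w` makes `F`
integrable, so `f` agrees almost everywhere with the inverse transform of `F`
(`ae_eq_fourierInv_fourier`), and the transform of `f g` is `(2π)^{-1/2}` times the convolution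
of `F` and `G` (`fHat_mul_eq`).

The norm bound uses no Young inequality. Cauchy-Schwarz in the convolution variable gives
`w ξ |∫ F η G (ξ - η) dη|² ≤ M ξ * ∫ |F η|² w η |G (ξ - η)|² w (ξ - η) dη` with
`M ξ = ∫ w ξ / (w η * w (ξ - η)) dη`. Since `w ξ ≤ 2 w η + 2 w (ξ - η)`, one has
`M ξ ≤ 4 ∫ 1 / w = 2π / κ` uniformly in `ξ` (`lintegral_weight_ratio_le`), and integrating in `ξ`
by Tonelli bounds the squared norm of `f g` by `κ⁻¹` times the product of the squared norms of
`f` and `g`. The constant is therefore `C = 1`.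
-/


open MeasureTheory

/-- Fourier transform with convention `f̂(ξ) = (2π)^{-1/2} ∫ e^{-iξx} f(x) dx`. -/
noncomputable def fHat (f : ℝ → ℂ) (ξ : ℝ) : ℂ :=
  (Real.sqrt (2 * Real.pi))⁻¹ • ∫ x : ℝ, Complex.exp (-(Complex.I * (ξ : ℂ) * (x : ℂ))) * f x

/-- The norm `‖f‖_{H^s_κ}`, with `‖f‖²_{H^s_κ} = ∫ |f̂(ξ)|² (ξ² + 4κ²)^s dξ`. -/
noncomputable def sobNormK (s κ : ℝ) (f : ℝ → ℂ) : ℝ :=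
  Real.sqrt (∫ ξ : ℝ, ‖fHat f ξ‖ ^ 2 * (ξ ^ 2 + 4 * κ ^ 2) ^ s)

open scoped FourierTransform ENNReal

lemma integral_fourier_mul_swap {a b : ℝ → ℂ} (ha : Integrable a) (hb : Integrable b) :
    ∫ v, 𝓕 a v * b v = ∫ x, a x * 𝓕 b x := by
  simpa using! VectorFourier.integral_fourierIntegral_smul_eq_flip (L := innerₗ ℝ)
    Real.continuous_fourierChar continuous_inner ha hb

lemma integral_fourierInv_mul_swap {a b : ℝ → ℂ} (ha : Integrable a) (hb : Integrable b) :
    ∫ v, 𝓕⁻ a v * b v = ∫ x, a x * 𝓕⁻ b x := by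
  rw [← integral_neg_eq_self]
  simp only [Real.fourierInv_eq_fourier_neg a, neg_neg]
  rw [integral_fourier_mul_swap ha hb.comp_neg]
  simp only [Real.fourierInv_eq_fourier_comp_neg b]

lemma continuous_fourier_real {f : ℝ → ℂ} (hf : Integrable f) : Continuous (𝓕 f) :=
  VectorFourier.fourierIntegral_continuous (L := innerₗ ℝ)
    Real.continuous_fourierChar continuous_inner hf

/-- Fourier inversion almost everywhere, with no continuity assumption on `f`: both sides have the
same pairing with every test function, because the Fourier transform is self-adjoint and inversion
holds for Schwartz functions. -/
lemma ae_eq_fourierInv_fourier {f : ℝ → ℂ} (hf : Integrable f) (hF : Integrable (𝓕 f)) :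
    f =ᵐ[volume] 𝓕⁻ (𝓕 f) := by
  have hc : Continuous (𝓕⁻ (𝓕 f)) := by
    have : 𝓕⁻ (𝓕 f) = fun x => 𝓕 (𝓕 f) (-x) := by
      ext x; exact Real.fourierInv_eq_fourier_neg _ _
    rw [this]
    exact (continuous_fourier_real hF).comp continuous_neg
  refine ae_eq_of_integral_contDiff_smul_eq hf.locallyIntegrable hc.locallyIntegrable ?_
  intro g hg hgc
  have hg' : ContDiff ℝ (⊤ : ℕ∞) (fun x => (g x : ℂ)) := Complex.ofRealCLM.contDiff.comp hg
  have hgc' : HasCompactSupport (fun x => (g x : ℂ)) := hgc.comp_left (g := Complex.ofReal) rfl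
  set φ : SchwartzMap ℝ ℂ := hgc'.toSchwartzMap hg' with hφ
  have hφe : ∀ x, φ x = g x := fun x => rfl
  have hφi : 𝓕 (⇑(𝓕⁻ φ : SchwartzMap ℝ ℂ)) = φ := by
    rw [← SchwartzMap.fourier_coe, FourierTransform.fourier_fourierInv_eq]
  have h1 : ∫ x, 𝓕⁻ (𝓕 f) x * φ x = ∫ x, f x * φ x := by
    rw [integral_fourierInv_mul_swap hF φ.integrable, ← SchwartzMap.fourierInv_coe,
      integral_fourier_mul_swap hf (𝓕⁻ φ : SchwartzMap ℝ ℂ).integrable, hφi]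
  simp only [hφe] at h1
  simp only [Complex.real_smul]
  simpa only [mul_comm] using h1.symm

/-- The Fourier transform turns products into convolutions. The factor `f` is replaced by
`𝓕⁻ (𝓕 f)`, and `𝓕⁻` is then moved onto `x ↦ e^{-2πixv} g x`, whose inverse transform is
`u ↦ 𝓕 g (v - u)`. -/
lemma fourier_mul_eq {f g : ℝ → ℂ} (hf : Integrable f) (hF : Integrable (𝓕 f))
    (hg : Integrable g) (v : ℝ) :
    𝓕 (fun x => f x * g x) v = ∫ u, 𝓕 f u * 𝓕 g (v - u) := by
  -- The modulation of `g` by the character of frequency `-v`.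
  set b : ℝ → ℂ := fun x => (Real.fourierChar (-(x * v)) : ℂ) * g x with hb
  have hbi : Integrable b := by
    refine hg.bdd_mul (c := 1) (Continuous.aestronglyMeasurable ?_) (ae_of_all _ fun x => (Circle.norm_coe _).le)
    exact continuous_induced_dom.comp (Real.continuous_fourierChar.comp (by fun_prop))
  have hbF : ∀ u, 𝓕⁻ b u = 𝓕 g (v - u) := by
    intro u
    rw [Real.fourierInv_eq, Real.fourier_eq]
    congr 1; ext x
    simp only [hb, Circle.smul_def, smul_eq_mul, ← mul_assoc, ← Circle.coe_mul,
      ← AddChar.map_add_eq_mul]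
    congr 4
    simp; ring
  calc 𝓕 (fun x => f x * g x) v = ∫ x, f x * b x := by
        rw [Real.fourier_eq]
        congr 1; ext x
        simp only [hb, Circle.smul_def, smul_eq_mul]
        simp only [RCLike.inner_apply, conj_trivial, mul_comm v x]
        ring
    _ = ∫ x, 𝓕⁻ (𝓕 f) x * b x := by
        apply integral_congr_ae
        filter_upwards [ae_eq_fourierInv_fourier hf hF] with x hx
        rw [← hx]
    _ = ∫ u, 𝓕 f u * 𝓕⁻ b u := integral_fourierInv_mul_swap hF hbi
    _ = _ := by simp only [hbF]

lemma fHat_eq (f : ℝ → ℂ) (ξ : ℝ) :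
    fHat f ξ = (Real.sqrt (2 * Real.pi))⁻¹ • 𝓕 f (ξ / (2 * Real.pi)) := by
  rw [fHat, Real.fourier_eq']
  congr 2; ext x
  simp only [smul_eq_mul]
  congr 2
  have : (Real.pi : ℂ) ≠ 0 := by exact_mod_cast Real.pi_ne_zero
  simp
  field_simp

lemma continuous_fHat {f : ℝ → ℂ} (hf : Integrable f) : Continuous (fHat f) := by
  have : fHat f = fun ξ => (Real.sqrt (2 * Real.pi))⁻¹ • 𝓕 f (ξ / (2 * Real.pi)) :=
    funext (fHat_eq f)
  rw [this]
  have := continuous_fourier_real hf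
  fun_prop

lemma fHat_mul_eq {f g : ℝ → ℂ} (hf : Integrable f) (hF : Integrable (fHat f))
    (hg : Integrable g) (ξ : ℝ) :
    fHat (fun x => f x * g x) ξ
      = (Real.sqrt (2 * Real.pi))⁻¹ • ∫ η, fHat f η * fHat g (ξ - η) := by
  have hpi : (0 : ℝ) < 2 * Real.pi := by positivity
  have hs : Real.sqrt (2 * Real.pi) ≠ 0 := by positivity
  have hF' : Integrable (𝓕 f) := by
    have h := (hF.comp_mul_left' (R := 2 * Real.pi) hpi.ne').smul (Real.sqrt (2 * Real.pi))
    refine h.congr (ae_of_all _ fun u => ?_)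
    simp only [Pi.smul_apply, fHat_eq, smul_smul]
    rw [mul_inv_cancel₀ hs, one_smul, mul_div_cancel_left₀ _ hpi.ne']
  rw [fHat_eq, fourier_mul_eq hf hF' hg]
  congr 1
  have h := Measure.integral_comp_div
    (fun u => 𝓕 f u * 𝓕 g (ξ / (2 * Real.pi) - u)) (2 * Real.pi)
  rw [abs_of_pos hpi] at h
  have h2 : ∀ η, fHat f η * fHat g (ξ - η) = ((2 * Real.pi)⁻¹ : ℝ) •
      (𝓕 f (η / (2 * Real.pi)) * 𝓕 g (ξ / (2 * Real.pi) - η / (2 * Real.pi))) := by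
    intro η
    rw [fHat_eq, fHat_eq, smul_mul_smul_comm, ← mul_inv, Real.mul_self_sqrt hpi.le, sub_div]
  simp only [h2]
  rw [integral_smul, h, smul_smul, inv_mul_cancel₀ hpi.ne', one_smul]

lemma inv_weight_eq {κ : ℝ} (hκ : 0 < κ) (η : ℝ) :
    (η ^ 2 + 4 * κ ^ 2)⁻¹ = (4 * κ ^ 2)⁻¹ * (1 + (η / (2 * κ)) ^ 2)⁻¹ := by
  rw [← mul_inv]; congr 1; field_simp; ring

lemma integrable_inv_weight {κ : ℝ} (hκ : 0 < κ) :
    Integrable (fun η : ℝ => (η ^ 2 + 4 * κ ^ 2)⁻¹) := by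
  simp only [inv_weight_eq hκ]
  exact (integrable_inv_one_add_sq.comp_div (by positivity)).const_mul _

lemma lintegral_inv_weight {κ : ℝ} (hκ : 0 < κ) :
    ∫⁻ η : ℝ, ENNReal.ofReal (η ^ 2 + 4 * κ ^ 2)⁻¹ = ENNReal.ofReal (Real.pi / (2 * κ)) := by
  rw [← ofReal_integral_eq_lintegral_ofReal (integrable_inv_weight hκ)
    (ae_of_all _ fun η => by positivity)]
  congr 1
  simp only [inv_weight_eq hκ]
  rw [integral_const_mul, Measure.integral_comp_div (fun y : ℝ => (1 + y ^ 2)⁻¹),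
    integral_univ_inv_one_add_sq, abs_of_pos (by positivity), smul_eq_mul]
  field_simp; ring

lemma weight_le (κ ξ η : ℝ) :
    ξ ^ 2 + 4 * κ ^ 2 ≤ 2 * (η ^ 2 + 4 * κ ^ 2) + 2 * ((ξ - η) ^ 2 + 4 * κ ^ 2) := by
  nlinarith [sq_nonneg (ξ - 2 * η), sq_nonneg κ]

/-- The source of the `κ`-gain: with `w η = η ^ 2 + 4 κ ^ 2`, the bound
`w ξ ≤ 2 w η + 2 w (ξ - η)` reduces the integral of `w ξ / (w η * w (ξ - η))` to four copies of
`∫ 1 / w = π / (2 κ)`. -/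
lemma lintegral_weight_ratio_le {κ : ℝ} (hκ : 0 < κ) (ξ : ℝ) :
    ENNReal.ofReal (ξ ^ 2 + 4 * κ ^ 2) * ∫⁻ η, ENNReal.ofReal
      (((η ^ 2 + 4 * κ ^ 2) * ((ξ - η) ^ 2 + 4 * κ ^ 2))⁻¹) ≤ ENNReal.ofReal (2 * Real.pi / κ) := by
  calc _ = ∫⁻ η, ENNReal.ofReal (ξ ^ 2 + 4 * κ ^ 2) * ENNReal.ofReal
          (((η ^ 2 + 4 * κ ^ 2) * ((ξ - η) ^ 2 + 4 * κ ^ 2))⁻¹) := by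
        rw [lintegral_const_mul _ (by fun_prop)]
    _ ≤ ∫⁻ η, (2 * ENNReal.ofReal (η ^ 2 + 4 * κ ^ 2)⁻¹
          + 2 * ENNReal.ofReal ((ξ - η) ^ 2 + 4 * κ ^ 2)⁻¹) := by
        apply lintegral_mono
        intro η
        have h2 : (2 : ℝ≥0∞) = ENNReal.ofReal 2 := by simp
        have hA : 0 < η ^ 2 + 4 * κ ^ 2 := by positivity
        have hB : 0 < (ξ - η) ^ 2 + 4 * κ ^ 2 := by positivity
        simp only [h2]
        rw [← ENNReal.ofReal_mul (by positivity), ← ENNReal.ofReal_mul (by positivity),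
          ← ENNReal.ofReal_mul (by positivity), ← ENNReal.ofReal_add (by positivity) (by positivity)]
        apply ENNReal.ofReal_le_ofReal
        have := weight_le κ ξ η
        rw [← div_eq_mul_inv, div_le_iff₀ (by positivity)]
        field_simp
        linarith
    _ = 2 * ENNReal.ofReal (Real.pi / (2 * κ)) + 2 * ENNReal.ofReal (Real.pi / (2 * κ)) := by
        rw [lintegral_add_left (by fun_prop), lintegral_const_mul _ (by fun_prop),
          lintegral_const_mul _ (by fun_prop),
          lintegral_sub_left_eq_self (fun y : ℝ => ENNReal.ofReal (y ^ 2 + 4 * κ ^ 2)⁻¹) ξ,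
          lintegral_inv_weight hκ]
    _ = ENNReal.ofReal (2 * Real.pi / κ) := by
        have h2 : (2 : ℝ≥0∞) = ENNReal.ofReal 2 := by simp
        rw [h2, ← ENNReal.ofReal_mul (by positivity),
          ← ENNReal.ofReal_add (by positivity) (by positivity)]
        congr 1; field_simp; ring

/-- The Cauchy-Schwarz inequality for `ℝ≥0∞`-valued functions. -/
lemma lintegral_mul_sq_le {a b : ℝ → ℝ≥0∞} (ha : AEMeasurable a) (hb : AEMeasurable b) :
    (∫⁻ x, a x * b x) ^ 2 ≤ (∫⁻ x, a x ^ 2) * ∫⁻ x, b x ^ 2 := by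
  have h := ENNReal.lintegral_mul_le_Lp_mul_Lq volume Real.HolderConjugate.two_two ha hb
  simp only [ENNReal.rpow_two, Pi.mul_apply] at h
  calc _ ≤ _ := pow_le_pow_left' h 2
    _ = _ := by
      rw [mul_pow, ← ENNReal.rpow_two, ← ENNReal.rpow_two, ← ENNReal.rpow_mul,
        ← ENNReal.rpow_mul]
      norm_num

/-- Pointwise bound for a weighted convolution, by Cauchy-Schwarz after inserting the factor
`√(w η * w (ξ - η))` and its inverse, where `w η = η ^ 2 + 4 κ ^ 2`. -/
lemma enorm_sq_conv_le {κ : ℝ} (hκ : 0 < κ) {F G : ℝ → ℂ} (hF : Continuous F)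
    (hG : Continuous G) (ξ : ℝ) :
    ‖∫ η, F η * G (ξ - η)‖ₑ ^ 2 * ENNReal.ofReal (ξ ^ 2 + 4 * κ ^ 2) ≤
      ENNReal.ofReal (2 * Real.pi / κ) *
        ∫⁻ η, (‖F η‖ₑ ^ 2 * ENNReal.ofReal (η ^ 2 + 4 * κ ^ 2)) *
          (‖G (ξ - η)‖ₑ ^ 2 * ENNReal.ofReal ((ξ - η) ^ 2 + 4 * κ ^ 2)) := by
  set W : ℝ → ℝ := fun η => (η ^ 2 + 4 * κ ^ 2) * ((ξ - η) ^ 2 + 4 * κ ^ 2) with hW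
  have hWpos : ∀ η, 0 < W η := fun η => by simp only [hW]; positivity
  have hWc : Continuous W := by fun_prop
  set a : ℝ → ℝ≥0∞ := fun η => ‖F η * G (ξ - η)‖ₑ * ENNReal.ofReal (Real.sqrt (W η)) with ha
  set b : ℝ → ℝ≥0∞ := fun η => ENNReal.ofReal (Real.sqrt (W η))⁻¹ with hb
  have ham : AEMeasurable a := by
    have h1 : Measurable fun η => ‖F η * G (ξ - η)‖ₑ :=
      (hF.mul (hG.comp (by fun_prop))).measurable.enorm
    have h2 : Measurable fun η => ENNReal.ofReal (Real.sqrt (W η)) :=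
      (Real.continuous_sqrt.comp hWc).measurable.ennreal_ofReal
    exact (h1.mul h2).aemeasurable
  have hbm : AEMeasurable b :=
    ((Real.continuous_sqrt.comp hWc).measurable.inv.ennreal_ofReal).aemeasurable
  have hab : ∀ η, a η * b η = ‖F η * G (ξ - η)‖ₑ := by
    intro η
    have : 0 < Real.sqrt (W η) := Real.sqrt_pos.2 (hWpos η)
    simp only [ha, hb]
    rw [mul_assoc, ← ENNReal.ofReal_mul this.le, mul_inv_cancel₀ this.ne']
    simp
  have ha2 : ∀ η, a η ^ 2 = (‖F η‖ₑ ^ 2 * ENNReal.ofReal (η ^ 2 + 4 * κ ^ 2)) *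
          (‖G (ξ - η)‖ₑ ^ 2 * ENNReal.ofReal ((ξ - η) ^ 2 + 4 * κ ^ 2)) := by
    intro η
    simp only [ha]
    rw [mul_pow, ← ENNReal.ofReal_pow (Real.sqrt_nonneg _), Real.sq_sqrt (hWpos η).le,
      enorm_mul, mul_pow]
    simp only [hW]
    rw [ENNReal.ofReal_mul (by positivity)]
    ring
  have hb2 : ∀ η, b η ^ 2 = ENNReal.ofReal (W η)⁻¹ := by
    intro η
    simp only [hb]
    rw [← ENNReal.ofReal_pow (by positivity), inv_pow, Real.sq_sqrt (hWpos η).le]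
  calc _ ≤ (∫⁻ η, a η * b η) ^ 2 * ENNReal.ofReal (ξ ^ 2 + 4 * κ ^ 2) := by
        simp only [hab]
        gcongr
        exact enorm_integral_le_lintegral_enorm _
    _ ≤ ((∫⁻ η, a η ^ 2) * ∫⁻ η, b η ^ 2) * ENNReal.ofReal (ξ ^ 2 + 4 * κ ^ 2) := by
        gcongr
        exact lintegral_mul_sq_le ham hbm
    _ = (ENNReal.ofReal (ξ ^ 2 + 4 * κ ^ 2) * ∫⁻ η, b η ^ 2) * ∫⁻ η, a η ^ 2 := by ring
    _ ≤ _ := by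
        simp only [ha2, hb2]
        gcongr
        exact lintegral_weight_ratio_le hκ ξ

lemma lintegral_conv_le {κ : ℝ} (hκ : 0 < κ) {F G : ℝ → ℂ} (hF : Continuous F)
    (hG : Continuous G) :
    ∫⁻ ξ, ‖∫ η, F η * G (ξ - η)‖ₑ ^ 2 * ENNReal.ofReal (ξ ^ 2 + 4 * κ ^ 2) ≤
      ENNReal.ofReal (2 * Real.pi / κ) *
        ((∫⁻ η, ‖F η‖ₑ ^ 2 * ENNReal.ofReal (η ^ 2 + 4 * κ ^ 2)) *
          ∫⁻ η, ‖G η‖ₑ ^ 2 * ENNReal.ofReal (η ^ 2 + 4 * κ ^ 2)) := by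
  set A : ℝ → ℝ≥0∞ := fun η => ‖F η‖ₑ ^ 2 * ENNReal.ofReal (η ^ 2 + 4 * κ ^ 2)
  set B : ℝ → ℝ≥0∞ := fun η => ‖G η‖ₑ ^ 2 * ENNReal.ofReal (η ^ 2 + 4 * κ ^ 2)
  have hA : Measurable A := (hF.measurable.enorm.pow_const 2).mul (by fun_prop)
  have hB : Measurable B := (hG.measurable.enorm.pow_const 2).mul (by fun_prop)
  calc _ ≤ ∫⁻ ξ, ENNReal.ofReal (2 * Real.pi / κ) * ∫⁻ η, A η * B (ξ - η) :=
        lintegral_mono fun ξ => enorm_sq_conv_le hκ hF hG ξ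
    _ = ENNReal.ofReal (2 * Real.pi / κ) * ∫⁻ ξ, ∫⁻ η, A η * B (ξ - η) :=
        lintegral_const_mul' _ _ ENNReal.ofReal_ne_top
    _ = ENNReal.ofReal (2 * Real.pi / κ) * ∫⁻ η, ∫⁻ ξ, A η * B (ξ - η) := by
        rw [lintegral_lintegral_swap]
        exact ((hA.comp measurable_snd).mul
          (hB.comp (measurable_fst.sub measurable_snd))).aemeasurable
    _ = _ := by
        congr 1
        rw [← lintegral_mul_const _ hA]
        refine lintegral_congr fun η => ?_
        rw [lintegral_const_mul (A η) (f := fun ξ => B (ξ - η)) (hB.comp (measurable_id.sub_const η)),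
          lintegral_sub_right_eq_self B η]

lemma integrable_of_weighted {κ : ℝ} (hκ : 0 < κ) {F : ℝ → ℂ} (hF : Continuous F)
    (h : Integrable (fun ξ : ℝ => ‖F ξ‖ ^ 2 * (ξ ^ 2 + 4 * κ ^ 2))) : Integrable F := by
  refine (h.add (integrable_inv_weight hκ)).mono' hF.aestronglyMeasurable (ae_of_all _ fun ξ => ?_)
  have hw : 0 < ξ ^ 2 + 4 * κ ^ 2 := by positivity
  have hn := norm_nonneg (F ξ)
  simp only [Pi.add_apply]
  -- `|F| ≤ |F|² w + 1 / w`, by completing the square.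
  rw [← sub_nonneg]
  have : ‖F ξ‖ ^ 2 * (ξ ^ 2 + 4 * κ ^ 2) + (ξ ^ 2 + 4 * κ ^ 2)⁻¹ - ‖F ξ‖
      = ((‖F ξ‖ * (ξ ^ 2 + 4 * κ ^ 2) - 1) ^ 2 + ‖F ξ‖ * (ξ ^ 2 + 4 * κ ^ 2))
        / (ξ ^ 2 + 4 * κ ^ 2) := by
    field_simp; ring
  rw [this]
  positivity

lemma ofReal_norm_sq_mul (z : ℂ) (w : ℝ) :
    ENNReal.ofReal (‖z‖ ^ 2 * w) = ‖z‖ₑ ^ 2 * ENNReal.ofReal w := by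
  rw [ENNReal.ofReal_mul (by positivity), ENNReal.ofReal_pow (norm_nonneg _), ofReal_norm]

/-- The squared algebra bound. The constant is `(2π)⁻¹ * (2π / κ) = κ⁻¹`, the factor `(2π)⁻¹` being
the square of the one in `fHat_mul_eq`. -/
lemma integral_weighted_mul_le {κ : ℝ} (hκ : 0 < κ) {f g : ℝ → ℂ} (hf : Integrable f)
    (hg : Integrable g) (hfg : Integrable (fun x => f x * g x))
    (hF : Integrable (fun ξ : ℝ => ‖fHat f ξ‖ ^ 2 * (ξ ^ 2 + 4 * κ ^ 2)))
    (hG : Integrable (fun ξ : ℝ => ‖fHat g ξ‖ ^ 2 * (ξ ^ 2 + 4 * κ ^ 2))) :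
    ∫ ξ : ℝ, ‖fHat (fun x => f x * g x) ξ‖ ^ 2 * (ξ ^ 2 + 4 * κ ^ 2) ≤
      κ⁻¹ * ((∫ ξ : ℝ, ‖fHat f ξ‖ ^ 2 * (ξ ^ 2 + 4 * κ ^ 2)) *
        ∫ ξ : ℝ, ‖fHat g ξ‖ ^ 2 * (ξ ^ 2 + 4 * κ ^ 2)) := by
  have hcf := continuous_fHat hf
  have hcg := continuous_fHat hg
  have hcfg := continuous_fHat hfg
  have nn : ∀ h : ℝ → ℂ, 0 ≤ ∫ ξ : ℝ, ‖fHat h ξ‖ ^ 2 * (ξ ^ 2 + 4 * κ ^ 2) :=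
    fun h => integral_nonneg fun ξ => by positivity
  have hFi := integrable_of_weighted hκ hcf hF
  have key := lintegral_conv_le hκ hcf hcg
  have e : ∀ h : ℝ → ℂ, Integrable (fun ξ : ℝ => ‖fHat h ξ‖ ^ 2 * (ξ ^ 2 + 4 * κ ^ 2)) →
      ∫⁻ ξ, ‖fHat h ξ‖ₑ ^ 2 * ENNReal.ofReal (ξ ^ 2 + 4 * κ ^ 2) =
        ENNReal.ofReal (∫ ξ : ℝ, ‖fHat h ξ‖ ^ 2 * (ξ ^ 2 + 4 * κ ^ 2)) := by
    intro h hi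
    rw [ofReal_integral_eq_lintegral_ofReal hi (ae_of_all _ fun ξ => by positivity)]
    simp only [ofReal_norm_sq_mul]
  rw [e f hF, e g hG, ← ENNReal.ofReal_mul (nn f),
    ← ENNReal.ofReal_mul (by positivity)] at key
  rw [integral_eq_lintegral_of_nonneg_ae (ae_of_all _ fun ξ => by positivity)
    (by fun_prop)]
  refine ENNReal.toReal_le_of_le_ofReal
    (mul_nonneg (by positivity) (mul_nonneg (nn f) (nn g))) ?_
  have hpt : ∀ ξ : ℝ, ENNReal.ofReal (‖fHat (fun x => f x * g x) ξ‖ ^ 2 * (ξ ^ 2 + 4 * κ ^ 2))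
      = ENNReal.ofReal (2 * Real.pi)⁻¹ * (‖∫ η, fHat f η * fHat g (ξ - η)‖ₑ ^ 2 *
          ENNReal.ofReal (ξ ^ 2 + 4 * κ ^ 2)) := by
    intro ξ
    rw [fHat_mul_eq hf hFi hg, norm_smul, mul_pow, mul_assoc, ENNReal.ofReal_mul (by positivity),
      ofReal_norm_sq_mul]
    congr 2
    rw [norm_inv, inv_pow, Real.norm_eq_abs, sq_abs, Real.sq_sqrt (by positivity)]
  simp only [hpt]
  rw [lintegral_const_mul' _ _ ENNReal.ofReal_ne_top]
  refine (mul_le_mul_right key _).trans (le_of_eq ?_)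
  rw [← ENNReal.ofReal_mul (by positivity)]
  congr 1
  field_simp

/-- the algebra bound with κ-gain:
`‖fg‖_{H¹_κ} ≤ C κ^{-1/2} ‖f‖_{H¹_κ} ‖g‖_{H¹_κ}` uniformly for `κ ≥ 1`. -/
theorem stmt1 :
    ∃ C > 0, ∀ κ : ℝ, 1 ≤ κ → ∀ f g : ℝ → ℂ,
      Integrable f → Integrable g → Integrable (fun x => f x * g x) →
      Integrable (fun ξ : ℝ => ‖fHat f ξ‖ ^ 2 * (ξ ^ 2 + 4 * κ ^ 2)) →
      Integrable (fun ξ : ℝ => ‖fHat g ξ‖ ^ 2 * (ξ ^ 2 + 4 * κ ^ 2)) →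
      sobNormK 1 κ (fun x => f x * g x)
        ≤ C * κ ^ (-(1/2) : ℝ) * sobNormK 1 κ f * sobNormK 1 κ g := by
  refine ⟨1, one_pos, fun κ hκ f g hf hg hfg hF hG => ?_⟩
  have hκ0 : 0 < κ := by linarith
  have h := integral_weighted_mul_le hκ0 hf hg hfg hF hG
  simp only [sobNormK, Real.rpow_one]
  have hr : κ ^ (-(1/2) : ℝ) = Real.sqrt κ⁻¹ := by
    rw [Real.rpow_neg hκ0.le, Real.sqrt_inv, Real.sqrt_eq_rpow]
  rw [hr, one_mul, mul_assoc, ← Real.sqrt_mul (integral_nonneg fun ξ => by positivity),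
    ← Real.sqrt_mul (by positivity)]
  exact Real.sqrt_le_sqrt h
end

section
/- Weighted mapping property of the free resolvent in κ-Sobolev spaces: if w > 0 satisfies |w'| + |w''| ≲ w and w(y)/w(x) ≲ e^{|x-y|/2}, then the operator w R₀(κ) (1/w) maps H^{-1}_κ boundedly to H¹_κ with norm ≲ 1 uniformly for κ ≥ 1. -/
/-!
Write `R₀ = (-∂² + κ²)⁻¹` and `F = R₀ f`. Conjugation by `w` perturbs the operator only at first
order: `w (-∂² + κ²) (1/w) F = f + q` with `q = 2 (w'/w) F' + (w''/w - 2 (w'/w)²) F`, hence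
`w R₀ (1/w) f = F - H` with `H = w R₀ (1/w) q`.

* The Fourier transform of `F` is `f̂ / (ξ² + κ²)`, so the `H¹_κ` norm of `F` is controlled by the
  `H⁻¹_κ` norm of `f`. The same formula and Plancherel bound `F`, `F'` in `L²`. Since `w'/w` and
  `w''/w` are bounded, so is `q`.
* The kernels of `w R₀ (1/w)` and `∂ w R₀ (1/w)` are `O(κ⁻¹ e^{-κ|x-y|/2})` and `O(e^{-κ|x-y|/2})`,
  because `w(x)/w(y) ≲ e^{|x-y|/2} ≤ e^{κ|x-y|/2}`. Schur's test (`KerBound.integral_sq_kop_le`)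
  bounds `κ H` and `H'` in `L²` by `q`, and Plancherel (`fHat_plancherel`) converts this to an
  `H¹_κ` bound of `H`.

As `f` is only integrable, the resolvent identity is proved at the level of kernels
(`IsWeight.kerG_eq`), where the integrand in `z` is an exact derivative on each of the three
intervals cut out by `x` and `y`. Likewise `∂` turns into `iξ` kernel by kernel (`IsWeight.fHat_kerG'`).
Integral operators with exponentially bounded kernels map `L¹` into `L¹ ∩ L²`, so that all the
functions to which Plancherel is applied are in `L¹ ∩ L²`.
-/

open MeasureTheory

/-- The weighted operator `w R₀(κ) (1/w)`, given by integration against the kernel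
`w(x) (2κ)⁻¹ e^{-κ|x-y|} w(y)⁻¹`. -/
noncomputable def weightedResolventApply (κ : ℝ) (w : ℝ → ℝ) (f : ℝ → ℂ) (x : ℝ) : ℂ :=
  (w x : ℂ) * ∫ y : ℝ, (((2 * κ)⁻¹ * Real.exp (-κ * |x - y|) * (w y)⁻¹ : ℝ) : ℂ) * f y

/-! ### Plancherel -/

open FourierTransform in
lemma fHat_eq_fourier (φ : ℝ → ℂ) (ξ : ℝ) :
    fHat φ ξ = (Real.sqrt (2 * Real.pi))⁻¹ • 𝓕 φ (ξ / (2 * Real.pi)) := by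
  rw [fHat, Real.fourier_real_eq_integral_exp_smul]
  congr 2
  funext x
  rw [smul_eq_mul]
  congr 2
  have : (Real.pi : ℂ) ≠ 0 := by exact_mod_cast Real.pi_ne_zero
  push_cast
  field_simp

open FourierTransform in
/-- The Fourier integral on `L¹` agrees on `L¹ ∩ L²` with the unitary Fourier transform of `L²`:
both have the same integrals against smooth compactly supported functions. -/
lemma fourier_ae_eq {φ : ℝ → ℂ} (h1 : Integrable φ) (h2 : MemLp φ 2) :
    𝓕 φ =ᵐ[volume] (𝓕 (h2.toLp φ) : Lp ℂ 2 (volume : Measure ℝ)) := by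
  have hc : Continuous (𝓕 φ) :=
    VectorFourier.fourierIntegral_continuous Real.continuous_fourierChar
      (by exact continuous_inner) h1
  refine ae_eq_of_integral_contDiff_smul_eq hc.locallyIntegrable
    ((Lp.memLp _).locallyIntegrable (by norm_num)) ?_
  intro g hg hgs
  have hgc : HasCompactSupport (fun x => (g x : ℂ)) :=
    hgs.comp_left (g := fun t : ℝ => (t : ℂ)) (by simp)
  let s : SchwartzMap ℝ ℂ := hgc.toSchwartzMap (Complex.ofRealCLM.contDiff.comp hg)
  have hs : ∀ x, s x = (g x : ℂ) := fun x => rfl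
  have key := congrArg (fun T => T s) (Lp.fourier_toTemperedDistribution_eq (h2.toLp φ))
  simp only [TemperedDistribution.fourier_apply, Lp.toTemperedDistribution_apply] at key
  have e1 : ∫ x, g x • (𝓕 (h2.toLp φ) : Lp ℂ 2 (volume : Measure ℝ)) x
      = ∫ x, s x • (𝓕 (h2.toLp φ) : Lp ℂ 2 (volume : Measure ℝ)) x := by
    congr 1
  have e2 : ∫ x, g x • 𝓕 φ x = ∫ x, s x • 𝓕 φ x := by
    congr 1
  rw [e1, e2, ← key]
  have := VectorFourier.integral_fourierIntegral_smul_eq_flip (μ := volume) (ν := volume)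
    (L := innerₗ ℝ) Real.continuous_fourierChar continuous_inner s.integrable h1
  rw [flip_innerₗ] at this
  refine this.symm.trans ?_
  refine integral_congr_ae ?_
  filter_upwards [h2.coeFn_toLp] with x hx
  rw [hx]
  rfl

open FourierTransform in
/-- Plancherel's theorem for `fHat` on `L¹ ∩ L²`. -/
lemma fHat_plancherel {φ : ℝ → ℂ} (h1 : Integrable φ) (h2 : MemLp φ 2) :
    Integrable (fun ξ => ‖fHat φ ξ‖ ^ 2) ∧ ∫ ξ, ‖fHat φ ξ‖ ^ 2 = ∫ x, ‖φ x‖ ^ 2 := by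
  have hpi : 0 < 2 * Real.pi := by positivity
  have hsq : ∀ ξ, ‖fHat φ ξ‖ ^ 2 = (2 * Real.pi)⁻¹ * (‖𝓕 φ (ξ / (2 * Real.pi))‖ ^ 2) := by
    intro ξ
    rw [fHat_eq_fourier, norm_smul, mul_pow, Real.norm_of_nonneg (by positivity), inv_pow,
      Real.sq_sqrt hpi.le]
  have hae := fourier_ae_eq h1 h2
  have hL : MemLp (𝓕 φ) 2 := (memLp_congr_ae hae).2 (Lp.memLp _)
  have nrm : ∀ (ψ : ℝ → ℂ) (h : MemLp ψ 2), ∫ x, ‖ψ x‖ ^ 2 = ‖h.toLp ψ‖ ^ 2 := by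
    intro ψ h
    rw [← @inner_self_eq_norm_sq ℂ, L2.inner_def, ← integral_re (L2.integrable_inner _ _)]
    refine integral_congr_ae ?_
    filter_upwards [h.coeFn_toLp] with x hx
    rw [hx, inner_self_eq_norm_sq]
  have hI : Integrable (fun ξ => ‖𝓕 φ ξ‖ ^ 2) := hL.integrable_norm_pow (by norm_num)
  simp only [hsq]
  refine ⟨(hI.comp_div hpi.ne').const_mul _, ?_⟩
  rw [integral_const_mul, Measure.integral_comp_div (fun x => ‖𝓕 φ x‖ ^ 2), abs_of_pos hpi,
    smul_eq_mul, inv_mul_cancel_left₀ hpi.ne', nrm _ hL, nrm _ h2]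
  congr 1
  rw [← Lp.norm_fourier_eq (h2.toLp φ)]
  congr 1
  refine Lp.ext ?_
  exact hL.coeFn_toLp.trans hae

/-! ### Exponentially decaying kernels -/

lemma integral_exp_neg_abs {c : ℝ} (hc : 0 < c) : ∫ x : ℝ, Real.exp (-c * |x|) = 2 / c := by
  rw [integral_comp_abs (f := fun x => Real.exp (-c * x)),
    integral_exp_mul_Ioi (by linarith) 0]
  simp
  ring

lemma integrable_exp_neg_abs {c : ℝ} (hc : 0 < c) :
    Integrable (fun x : ℝ => Real.exp (-c * |x|)) := by
  refine Integrable.of_integral_ne_zero ?_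
  rw [integral_exp_neg_abs hc]
  positivity

/-- The operator with integral kernel `P`. -/
noncomputable def kop (P : ℝ → ℝ → ℝ) (φ : ℝ → ℂ) (x : ℝ) : ℂ := ∫ y, (P x y : ℂ) * φ y

/-- A measurable kernel dominated by `A e^{-c|x-y|}`. -/
structure KerBound (P : ℝ → ℝ → ℝ) (A c : ℝ) : Prop where
  meas : Measurable (fun p : ℝ × ℝ => P p.1 p.2)
  bound : ∀ x y, |P x y| ≤ A * Real.exp (-c * |x - y|)

namespace KerBound

variable {P Q : ℝ → ℝ → ℝ} {A B c d : ℝ} {φ : ℝ → ℂ}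

lemma nonneg (h : KerBound P A c) : 0 ≤ A := by
  have := (abs_nonneg _).trans (h.bound 0 0)
  simpa using this

lemma bound' (h : KerBound P A c) (hc : 0 < c) (x y : ℝ) : |P x y| ≤ A := by
  refine (h.bound x y).trans ?_
  refine mul_le_of_le_one_right h.nonneg ?_
  rw [Real.exp_le_one_iff]
  nlinarith [abs_nonneg (x - y)]

lemma prod_integrable (h : KerBound P A c) (hc : 0 < c) (hφ : Integrable φ) :
    Integrable (fun p : ℝ × ℝ => (P p.1 p.2 : ℂ) * φ p.2) (volume.prod volume) := by
  have h1 := (hφ.norm.convolution_integrand (μ := volume) (ContinuousLinearMap.mul ℝ ℝ)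
    (integrable_exp_neg_abs hc)).const_mul A
  refine h1.mono' ?_ (Filter.Eventually.of_forall fun p => ?_)
  · exact (Complex.measurable_ofReal.comp h.meas).aestronglyMeasurable.mul
      hφ.aestronglyMeasurable.comp_snd
  · rw [norm_mul, Complex.norm_real, Real.norm_eq_abs, ContinuousLinearMap.mul_apply',
      mul_comm ‖φ p.2‖, ← mul_assoc]
    exact mul_le_mul_of_nonneg_right (h.bound _ _) (norm_nonneg _)

lemma integrable_kop (h : KerBound P A c) (hc : 0 < c) (hφ : Integrable φ) :
    Integrable (kop P φ) :=
  (h.prod_integrable hc hφ).integral_prod_left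

lemma integrable_section (h : KerBound P A c) (hc : 0 < c) (hφ : Integrable φ) (x : ℝ) :
    Integrable (fun y => (P x y : ℂ) * φ y) := by
  refine hφ.bdd_mul (c := A) ?_ (Filter.Eventually.of_forall fun y => ?_)
  · exact (Complex.measurable_ofReal.comp (h.meas.comp measurable_prodMk_left)).aestronglyMeasurable
  · rw [Complex.norm_real]
    exact h.bound' hc x y

lemma integrable_left (h : KerBound P A c) (hc : 0 < c) (y : ℝ) :
    Integrable (fun x => P x y) := by
  exact (((integrable_exp_neg_abs hc).comp_sub_right y).const_mul A).mono'
    (h.meas.comp measurable_prodMk_right).aestronglyMeasurable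
    (Filter.Eventually.of_forall fun x => h.bound x y)

lemma norm_kop_le (h : KerBound P A c) (hc : 0 < c) (hφ : Integrable φ) (x : ℝ) :
    ‖kop P φ x‖ ≤ A * ∫ y, ‖φ y‖ := by
  rw [← integral_const_mul]
  refine norm_integral_le_of_norm_le (hφ.norm.const_mul A) (Filter.Eventually.of_forall fun y => ?_)
  rw [norm_mul, Complex.norm_real]
  exact mul_le_mul_of_nonneg_right (h.bound' hc x y) (norm_nonneg _)

lemma memLp_kop (h : KerBound P A c) (hc : 0 < c) (hφ : Integrable φ) :
    MemLp (kop P φ) 2 := by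
  have hi := h.integrable_kop hc hφ
  rw [memLp_two_iff_integrable_sq_norm hi.aestronglyMeasurable]
  refine (hi.norm.const_mul (A * ∫ y, ‖φ y‖)).mono' (hi.aestronglyMeasurable.norm.pow 2)
    (Filter.Eventually.of_forall fun x => ?_)
  rw [Real.norm_of_nonneg (by positivity), sq]
  exact mul_le_mul_of_nonneg_right (h.norm_kop_le hc hφ x) (norm_nonneg _)

lemma fHat_kop (h : KerBound P A c) (hc : 0 < c) (hφ : Integrable φ) (ξ : ℝ) :
    fHat (kop P φ) ξ = ∫ y, fHat (fun x => (P x y : ℂ)) ξ * φ y := by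
  have hE : Integrable (fun p : ℝ × ℝ => Complex.exp (-(Complex.I * (ξ : ℂ) * (p.1 : ℂ)))
      * ((P p.1 p.2 : ℂ) * φ p.2)) (volume.prod volume) := by
    refine (h.prod_integrable hc hφ).bdd_mul (c := 1)
      (Continuous.aestronglyMeasurable (by fun_prop)) (Filter.Eventually.of_forall fun p => ?_)
    rw [Complex.norm_exp]
    simp
  simp only [fHat, kop, smul_mul_assoc]
  rw [integral_smul]
  congr 1
  simp only [← integral_const_mul, ← integral_mul_const]
  rw [integral_integral_swap hE]
  simp only [mul_assoc]

lemma kop_kop (h : KerBound P A c) (hc : 0 < c) (h' : KerBound Q B d) (hd : 0 < d)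
    (hφ : Integrable φ) (x : ℝ) :
    kop P (kop Q φ) x = ∫ y, ((∫ z, P x z * Q z y : ℝ) : ℂ) * φ y := by
  have hE : Integrable (fun p : ℝ × ℝ => (P x p.1 : ℂ) * ((Q p.1 p.2 : ℂ) * φ p.2))
      (volume.prod volume) := by
    refine (h'.prod_integrable hd hφ).bdd_mul (c := A) ?_ (Filter.Eventually.of_forall fun p => ?_)
    · exact (Complex.measurable_ofReal.comp (h.meas.comp
        (measurable_const.prodMk measurable_fst))).aestronglyMeasurable
    · rw [Complex.norm_real]
      exact h.bound' hc _ _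
  simp only [kop, ← integral_const_mul]
  rw [integral_integral_swap hE]
  refine integral_congr_ae (Filter.Eventually.of_forall fun y => ?_)
  simp only
  rw [← integral_complex_ofReal, ← integral_mul_const]
  simp only [mul_assoc, Complex.ofReal_mul]

/-- Schur's test for the kernel `A e^{-c|x-y|}`, whose marginals are `2A/c`. -/
lemma integral_sq_kop_le (h : KerBound P A c) (hc : 0 < c) (hφ : Integrable φ)
    (hφ2 : MemLp φ 2) :
    ∫ x, ‖kop P φ x‖ ^ 2 ≤ (2 * A / c) ^ 2 * ∫ x, ‖φ x‖ ^ 2 := by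
  have hA := h.nonneg
  have hI2 : Integrable (fun x => ‖φ x‖ ^ 2) := hφ2.integrable_norm_pow (by norm_num)
  have hsec : ∀ (u : ℝ → ℝ), Integrable u → ∀ x,
      Integrable (fun y => Real.exp (-c * |x - y|) * u y) := by
    intro u hu x
    refine hu.bdd_mul (c := 1) (Continuous.aestronglyMeasurable (by fun_prop))
      (Filter.Eventually.of_forall fun y => ?_)
    rw [Real.norm_of_nonneg (Real.exp_nonneg _), Real.exp_le_one_iff]
    nlinarith [abs_nonneg (x - y)]
  have hconst : ∀ x, ∫ y, Real.exp (-c * |x - y|) = 2 / c := by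
    intro x
    rw [← integral_exp_neg_abs hc]
    exact integral_sub_left_eq_self (fun y => Real.exp (-c * |y|)) volume x
  have hconstI : ∀ x, Integrable (fun y => Real.exp (-c * |x - y|)) := fun x =>
    (integrable_exp_neg_abs hc).comp_sub_left x
  have hpt : ∀ x, ‖kop P φ x‖ ^ 2
      ≤ A ^ 2 * (2 / c) * ∫ y, Real.exp (-c * |x - y|) * ‖φ y‖ ^ 2 := by
    intro x
    set a := ∫ y, Real.exp (-c * |x - y|) * ‖φ y‖ with ha
    set b := ∫ y, Real.exp (-c * |x - y|) * ‖φ y‖ ^ 2 with hb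
    have h1 : ‖kop P φ x‖ ≤ A * a := by
      rw [ha, ← integral_const_mul]
      refine norm_integral_le_of_norm_le ((hsec _ hφ.norm x).const_mul A)
        (Filter.Eventually.of_forall fun y => ?_)
      rw [norm_mul, Complex.norm_real, ← mul_assoc]
      exact mul_le_mul_of_nonneg_right (h.bound x y) (norm_nonneg _)
    -- Cauchy–Schwarz: the variance about the mean `t = a / (2/c)` is nonnegative.
    have h2 : a ^ 2 ≤ 2 / c * b := by
      have hq : 0 ≤ ∫ y, Real.exp (-c * |x - y|) * (‖φ y‖ - a * c / 2) ^ 2 :=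
        integral_nonneg fun y => by positivity
      have he : ∀ y, Real.exp (-c * |x - y|) * (‖φ y‖ - a * c / 2) ^ 2
          = Real.exp (-c * |x - y|) * ‖φ y‖ ^ 2
            - (a * c) * (Real.exp (-c * |x - y|) * ‖φ y‖)
            + (a * c / 2) ^ 2 * Real.exp (-c * |x - y|) := fun y => by ring
      simp only [he] at hq
      have hd : Integrable (fun y => Real.exp (-c * |x - y|) * ‖φ y‖ ^ 2
          - (a * c) * (Real.exp (-c * |x - y|) * ‖φ y‖)) :=
        (hsec _ hI2 x).sub ((hsec _ hφ.norm x).const_mul _)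
      rw [integral_add hd ((hconstI x).const_mul _),
        integral_sub (hsec _ hI2 x) ((hsec _ hφ.norm x).const_mul _),
        integral_const_mul, integral_const_mul, hconst, ← ha, ← hb] at hq
      have : b - a * c * a + (a * c / 2) ^ 2 * (2 / c) = b - c / 2 * a ^ 2 := by
        field_simp
        ring
      rw [this] at hq
      rw [div_mul_eq_mul_div, le_div_iff₀ hc]
      linarith
    calc ‖kop P φ x‖ ^ 2 ≤ (A * a) ^ 2 := by gcongr
      _ = A ^ 2 * a ^ 2 := by ring
      _ ≤ A ^ 2 * (2 / c * b) := by gcongr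
      _ = _ := by ring
  have hprod := hI2.convolution_integrand (μ := volume) (ContinuousLinearMap.mul ℝ ℝ)
    (integrable_exp_neg_abs hc)
  have hswap : ∀ p : ℝ × ℝ, (ContinuousLinearMap.mul ℝ ℝ) (‖φ p.2‖ ^ 2)
      (Real.exp (-c * |p.1 - p.2|)) = Real.exp (-c * |p.1 - p.2|) * ‖φ p.2‖ ^ 2 := by
    intro p
    rw [ContinuousLinearMap.mul_apply', mul_comm]
  simp only [hswap] at hprod
  have hfub : ∫ x, ∫ y, Real.exp (-c * |x - y|) * ‖φ y‖ ^ 2 = 2 / c * ∫ y, ‖φ y‖ ^ 2 := by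
    rw [integral_integral_swap hprod, ← integral_const_mul]
    refine integral_congr_ae (Filter.Eventually.of_forall fun y => ?_)
    simp only
    rw [integral_mul_const, integral_sub_right_eq_self (fun x => Real.exp (-c * |x|)) y,
      integral_exp_neg_abs hc]
  calc ∫ x, ‖kop P φ x‖ ^ 2
      ≤ ∫ x, A ^ 2 * (2 / c) * ∫ y, Real.exp (-c * |x - y|) * ‖φ y‖ ^ 2 :=
        integral_mono ((h.memLp_kop hc hφ).integrable_norm_pow (by norm_num))
          (hprod.integral_prod_left.const_mul _) hpt
    _ = _ := by
        rw [integral_const_mul, hfub]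
        ring

end KerBound

/-! ### Fundamental theorem of calculus with jumps -/

section pieces

open Set Filter Topology

variable {E : Type*} [NormedAddCommGroup E] [NormedSpace ℝ E] [CompleteSpace E]
  {m A A' B B' D D' : ℝ → E}

lemma integral_Iic_piece {p : ℝ} (hA : ∀ x, HasDerivAt A (A' x) x) (hm : Integrable m)
    (e : ∀ x < p, m x = A' x) (hl : Tendsto A atBot (𝓝 0)) : ∫ x in Iic p, m x = A p := by
  have hi : IntegrableOn A' (Iic p) := by
    rw [integrableOn_Iic_iff_integrableOn_Iio]
    exact hm.integrableOn.congr_fun e measurableSet_Iio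
  rw [integral_Iic_eq_integral_Iio, setIntegral_congr_fun measurableSet_Iio e,
    ← integral_Iic_eq_integral_Iio,
    integral_Iic_of_hasDerivAt_of_tendsto' (fun x _ => hA x) hi hl, sub_zero]

lemma integral_Ioi_piece {p : ℝ} (hB : ∀ x, HasDerivAt B (B' x) x) (hm : Integrable m)
    (e : ∀ x, p < x → m x = B' x) (hl : Tendsto B atTop (𝓝 0)) :
    ∫ x in Ioi p, m x = - B p := by
  have hi : IntegrableOn B' (Ioi p) := hm.integrableOn.congr_fun e measurableSet_Ioi
  rw [setIntegral_congr_fun measurableSet_Ioi e,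
    integral_Ioi_of_hasDerivAt_of_tendsto' (fun x _ => hB x) hi hl, zero_sub]

/-- The fundamental theorem of calculus on the line for a primitive that jumps at `p`. -/
lemma integral_two_pieces {p : ℝ} (hA : ∀ x, HasDerivAt A (A' x) x)
    (hB : ∀ x, HasDerivAt B (B' x) x) (hm : Integrable m)
    (eA : ∀ x < p, m x = A' x) (eB : ∀ x, p < x → m x = B' x)
    (lA : Tendsto A atBot (𝓝 0)) (lB : Tendsto B atTop (𝓝 0)) :
    ∫ x, m x = A p - B p := by
  rw [← intervalIntegral.integral_Iic_add_Ioi (b := p) hm.integrableOn hm.integrableOn,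
    integral_Iic_piece hA hm eA lA, integral_Ioi_piece hB hm eB lB, sub_eq_add_neg]

/-- The fundamental theorem of calculus on the line for a primitive that jumps at `p` and `q`. -/
lemma integral_three_pieces {p q : ℝ} (hpq : p ≤ q) (hA : ∀ x, HasDerivAt A (A' x) x)
    (hD : ∀ x, HasDerivAt D (D' x) x) (hB : ∀ x, HasDerivAt B (B' x) x) (hm : Integrable m)
    (eA : ∀ x < p, m x = A' x) (eD : ∀ x, p < x → x < q → m x = D' x)
    (eB : ∀ x, q < x → m x = B' x)
    (lA : Tendsto A atBot (𝓝 0)) (lB : Tendsto B atTop (𝓝 0)) :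
    ∫ x, m x = A p + (D q - D p) - B q := by
  have hmid : ∫ x in p..q, m x = D q - D p := by
    have e : EqOn m D' (Ioo p q) := fun x hx => eD x hx.1 hx.2
    have hi : IntervalIntegrable D' volume p q := by
      rw [intervalIntegrable_iff_integrableOn_Ioo_of_le hpq]
      exact hm.integrableOn.congr_fun e measurableSet_Ioo
    rw [← intervalIntegral.integral_eq_sub_of_hasDerivAt (fun x _ => hD x) hi,
      intervalIntegral.integral_of_le hpq, intervalIntegral.integral_of_le hpq,
      integral_Ioc_eq_integral_Ioo, integral_Ioc_eq_integral_Ioo,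
      setIntegral_congr_fun measurableSet_Ioo e]
  rw [← intervalIntegral.integral_Iic_add_Ioi (b := p) hm.integrableOn hm.integrableOn,
    ← intervalIntegral.integral_interval_add_Ioi (a := p) (b := q) hm.integrableOn
      hm.integrableOn,
    integral_Iic_piece hA hm eA lA, integral_Ioi_piece hB hm eB lB, hmid]
  abel

end pieces

lemma KerBound.tendsto_left {P : ℝ → ℝ → ℝ} {A c : ℝ} (h : KerBound P A c) (hc : 0 < c)
    (y : ℝ) : Filter.Tendsto (fun x => P x y) Filter.atTop (nhds 0) ∧
      Filter.Tendsto (fun x => P x y) Filter.atBot (nhds 0) := by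
  have key : ∀ l : Filter ℝ, Filter.Tendsto (fun x : ℝ => |x - y|) l Filter.atTop →
      Filter.Tendsto (fun x => P x y) l (nhds 0) := by
    intro l hl
    have h1 : Filter.Tendsto (fun x => A * Real.exp (-c * |x - y|)) l (nhds 0) := by
      have := (Real.tendsto_exp_atBot.comp
        (hl.const_mul_atTop_of_neg (neg_lt_zero.2 hc))).const_mul A
      simpa using this
    exact squeeze_zero_norm (fun x => h.bound x y) h1
  refine ⟨key _ ?_, key _ ?_⟩
  · exact Filter.tendsto_abs_atTop_atTop.comp (Filter.tendsto_atTop_add_const_right _ (-y)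
      Filter.tendsto_id)
  · exact Filter.tendsto_abs_atBot_atTop.comp (Filter.tendsto_atBot_add_const_right _ (-y)
      Filter.tendsto_id)

/-! ### Kernels of the weighted resolvent -/

/-- The kernel of `w R₀(κ) (1/w)`. -/
noncomputable def kerG (κ : ℝ) (w : ℝ → ℝ) (x y : ℝ) : ℝ :=
  w x * ((2 * κ)⁻¹ * Real.exp (-κ * |x - y|) * (w y)⁻¹)

/-- The `x`-derivative of `kerG κ w x y` off the diagonal, where `w'` is the derivative of `w`. -/
noncomputable def kerG' (κ : ℝ) (w w' : ℝ → ℝ) (x y : ℝ) : ℝ :=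
  (w' x + (if x < y then κ else -κ) * w x) * ((2 * κ)⁻¹ * Real.exp (-κ * |x - y|) * (w y)⁻¹)

/-- The kernel of `(2 (w'/w) ∂ + (w''/w - 2 (w'/w)²)) R₀(κ)`, the perturbation
`w (-∂² + κ²) (1/w) - (-∂² + κ²)` applied after the free resolvent. -/
noncomputable def kerM (κ : ℝ) (w w' w'' : ℝ → ℝ) (x y : ℝ) : ℝ :=
  2 * (w' x / w x) * kerG' κ 1 0 x y
    + (w'' x / w x - 2 * (w' x / w x) ^ 2) * kerG κ 1 x y

/-- The hypotheses on the weight and on the spectral parameter. -/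
structure IsWeight (C₀ κ : ℝ) (w w' w'' : ℝ → ℝ) : Prop where
  hκ : 1 ≤ κ
  pos : ∀ x, 0 < w x
  d1 : ∀ x, HasDerivAt w (w' x) x
  d2 : ∀ x, HasDerivAt w' (w'' x) x
  bd : ∀ x, |w' x| + |w'' x| ≤ C₀ * w x
  ratio : ∀ x y, w y / w x ≤ C₀ * Real.exp (|x - y| / 2)

lemma IsWeight.one {κ : ℝ} (hκ : 1 ≤ κ) : IsWeight 1 κ 1 0 0 where
  hκ := hκ
  pos := by simp
  d1 x := hasDerivAt_const x 1
  d2 x := hasDerivAt_const x 0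
  bd := by simp
  ratio x y := by
    simp only [Pi.one_apply, div_one, one_mul]
    exact Real.one_le_exp (by positivity)

namespace IsWeight

variable {C₀ κ : ℝ} {w w' w'' : ℝ → ℝ}

lemma cont (h : IsWeight C₀ κ w w' w'') : Continuous w :=
  continuous_iff_continuousAt.2 fun x => (h.d1 x).continuousAt

lemma cont' (h : IsWeight C₀ κ w w' w'') : Continuous w' :=
  continuous_iff_continuousAt.2 fun x => (h.d2 x).continuousAt

lemma meas'' (h : IsWeight C₀ κ w w' w'') : Measurable w'' := by
  have : w'' = deriv w' := funext fun x => (h.d2 x).deriv.symm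
  rw [this]
  exact measurable_deriv w'

lemma C_pos (h : IsWeight C₀ κ w w' w'') : 0 < C₀ := by
  have := h.ratio 0 0
  rw [div_self (h.pos 0).ne'] at this
  simp at this
  linarith

lemma abs_a_le (h : IsWeight C₀ κ w w' w'') (x : ℝ) : |w' x / w x| ≤ C₀ := by
  rw [abs_div, abs_of_pos (h.pos x), div_le_iff₀ (h.pos x)]
  linarith [h.bd x, abs_nonneg (w'' x)]

lemma abs_b_le (h : IsWeight C₀ κ w w' w'') (x : ℝ) :
    |w'' x / w x - 2 * (w' x / w x) ^ 2| ≤ C₀ + 2 * C₀ ^ 2 := by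
  have h1 : |w'' x / w x| ≤ C₀ := by
    rw [abs_div, abs_of_pos (h.pos x), div_le_iff₀ (h.pos x)]
    linarith [h.bd x, abs_nonneg (w' x)]
  have h2 : (w' x / w x) ^ 2 ≤ C₀ ^ 2 := by
    rw [← sq_abs]
    exact pow_le_pow_left₀ (abs_nonneg _) (h.abs_a_le x) 2
  have h3 := abs_le.1 h1
  rw [abs_le]
  constructor <;> nlinarith [sq_nonneg (w' x / w x)]

/-- Conjugation by `w` costs at most half of the exponential decay, as `κ ≥ 1`. -/
lemma exp_ratio_le (h : IsWeight C₀ κ w w' w'') (x y : ℝ) :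
    w x * (Real.exp (-κ * |x - y|) * (w y)⁻¹) ≤ C₀ * Real.exp (-(κ / 2) * |x - y|) := by
  have h1 := h.ratio y x
  rw [abs_sub_comm] at h1
  have hκ := h.hκ
  calc w x * (Real.exp (-κ * |x - y|) * (w y)⁻¹)
      = (w x / w y) * Real.exp (-κ * |x - y|) := by
        rw [div_eq_mul_inv]
        ring
    _ ≤ C₀ * Real.exp (|x - y| / 2) * Real.exp (-κ * |x - y|) := by gcongr
    _ = C₀ * Real.exp (|x - y| / 2 + -κ * |x - y|) := by rw [Real.exp_add, mul_assoc]
    _ ≤ _ := by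
        have := h.C_pos
        gcongr
        nlinarith [abs_nonneg (x - y)]

lemma measG (h : IsWeight C₀ κ w w' w'') : Measurable (fun p : ℝ × ℝ => kerG κ w p.1 p.2) := by
  have := h.cont.measurable
  unfold kerG
  fun_prop

lemma boundG (h : IsWeight C₀ κ w w' w'') : KerBound (kerG κ w) (C₀ / (2 * κ)) (κ / 2) where
  meas := h.measG
  bound x y := by
    have hκ : 0 < κ := by linarith [h.hκ]
    have hx := h.pos x
    have hy := h.pos y
    have hn : 0 ≤ kerG κ w x y := by unfold kerG; positivity
    rw [abs_of_nonneg hn]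
    calc kerG κ w x y = (2 * κ)⁻¹ * (w x * (Real.exp (-κ * |x - y|) * (w y)⁻¹)) := by
          unfold kerG; ring
      _ ≤ (2 * κ)⁻¹ * (C₀ * Real.exp (-(κ / 2) * |x - y|)) :=
          mul_le_mul_of_nonneg_left (h.exp_ratio_le x y) (by positivity)
      _ = _ := by ring

lemma boundG' (h : IsWeight C₀ κ w w' w'') :
    KerBound (kerG' κ w w') ((C₀ + 1) * C₀) (κ / 2) where
  meas := by
    have h1 := h.cont.measurable
    have h2 := h.cont'.measurable
    have h3 : Measurable (fun p : ℝ × ℝ => if p.1 < p.2 then κ else -κ) :=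
      Measurable.ite (measurableSet_lt measurable_fst measurable_snd) measurable_const
        measurable_const
    unfold kerG'
    fun_prop
  bound x y := by
    have hκ : 0 < κ := by linarith [h.hκ]
    have hκ1 := h.hκ
    have hx := h.pos x
    have hy := h.pos y
    have hC := h.C_pos
    have h1 : |w' x + (if x < y then κ else -κ) * w x| ≤ (C₀ + κ) * w x := by
      have e : |(if x < y then κ else -κ) * w x| = κ * w x := by
        rw [abs_mul, abs_of_pos hx]
        split_ifs
        · rw [abs_of_pos hκ]
        · rw [abs_neg, abs_of_pos hκ]
      have := abs_add_le (w' x) ((if x < y then κ else -κ) * w x)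
      rw [e] at this
      linarith [h.bd x, abs_nonneg (w'' x)]
    have h2 : (C₀ + κ) * (2 * κ)⁻¹ ≤ C₀ + 1 := by
      rw [← div_eq_mul_inv, div_le_iff₀ (by positivity)]
      nlinarith
    unfold kerG'
    rw [abs_mul, abs_of_nonneg (by positivity :
      0 ≤ (2 * κ)⁻¹ * Real.exp (-κ * |x - y|) * (w y)⁻¹)]
    calc _ ≤ (C₀ + κ) * w x * ((2 * κ)⁻¹ * Real.exp (-κ * |x - y|) * (w y)⁻¹) := by gcongr
      _ = ((C₀ + κ) * (2 * κ)⁻¹) * (w x * (Real.exp (-κ * |x - y|) * (w y)⁻¹)) := by ring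
      _ ≤ (C₀ + 1) * (C₀ * Real.exp (-(κ / 2) * |x - y|)) :=
          mul_le_mul h2 (h.exp_ratio_le x y) (by positivity) (by positivity)
      _ = _ := by ring

lemma boundM (h : IsWeight C₀ κ w w' w'') :
    KerBound (kerM κ w w' w'') (4 * C₀ + (C₀ + 2 * C₀ ^ 2)) (κ / 2) where
  meas := by
    have h1 := h.cont.measurable
    have h2 := h.cont'.measurable
    have h3 := h.meas''
    have h4 := (IsWeight.one h.hκ).boundG.meas
    have h5 := (IsWeight.one h.hκ).boundG'.meas
    unfold kerM
    fun_prop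
  bound x y := by
    have hκ1 := h.hκ
    have hC := h.C_pos
    have g := (IsWeight.one h.hκ).boundG.bound x y
    have g' := (IsWeight.one h.hκ).boundG'.bound x y
    have e : 1 / (2 * κ) ≤ 1 := by
      rw [div_le_one (by positivity)]
      linarith
    have g2 : |kerG κ 1 x y| ≤ 1 * Real.exp (-(κ / 2) * |x - y|) := g.trans (by gcongr)
    unfold kerM
    refine (abs_add_le _ _).trans ?_
    rw [abs_mul, abs_mul, abs_mul, abs_two]
    calc _ ≤ 2 * C₀ * ((1 + 1) * 1 * Real.exp (-(κ / 2) * |x - y|))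
          + (C₀ + 2 * C₀ ^ 2) * (1 * Real.exp (-(κ / 2) * |x - y|)) := by
            gcongr
            · exact h.abs_a_le x
            · exact h.abs_b_le x
      _ = _ := by ring

/-- `∂ₓ` of the kernel becomes multiplication by `iξ`: the kernel is continuous across the
diagonal, so integration by parts leaves no boundary term. -/
lemma fHat_kerG' (h : IsWeight C₀ κ w w' w'') (ξ z : ℝ) :
    fHat (fun x => (kerG' κ w w' x z : ℂ)) ξ
      = Complex.I * ξ * fHat (fun x => (kerG κ w x z : ℂ)) ξ := by
  have hκ : 0 < κ / 2 := by linarith [h.hκ]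
  set e : ℝ → ℂ := fun x => Complex.exp (-(Complex.I * (ξ : ℂ) * (x : ℂ))) with he
  have hen : ∀ x, ‖e x‖ = 1 := by
    intro x
    rw [he, Complex.norm_exp]
    simp
  have hec : Continuous e := by fun_prop
  have hed : ∀ x, HasDerivAt e (e x * -(Complex.I * ξ)) x := by
    intro x
    have h1 : HasDerivAt (fun t : ℝ => -(Complex.I * (ξ : ℂ) * (t : ℂ))) (-(Complex.I * ξ)) x := by
      simpa using ((Complex.ofRealCLM.hasDerivAt (x := x)).const_mul (Complex.I * ξ)).fun_neg
    exact h1.cexp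
  have hi : ∀ {P : ℝ → ℝ → ℝ} {A : ℝ}, KerBound P A (κ / 2) →
      Integrable (fun x => e x * (P x z : ℂ)) := by
    intro P A hP
    exact (hP.integrable_left hκ z).ofReal.bdd_mul (c := 1) hec.aestronglyMeasurable
      (Filter.Eventually.of_forall fun x => (hen x).le)
  let g : ℝ → ℝ → ℝ := fun σ x => w x * ((2 * κ)⁻¹ * Real.exp (σ * κ * (x - z)) * (w z)⁻¹)
  let g' : ℝ → ℝ → ℝ := fun σ x =>
    (w' x + σ * κ * w x) * ((2 * κ)⁻¹ * Real.exp (σ * κ * (x - z)) * (w z)⁻¹)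
  have hg : ∀ σ x, HasDerivAt (g σ) (g' σ x) x := by
    intro σ x
    have h1 : HasDerivAt (fun x => Real.exp (σ * κ * (x - z)))
        (Real.exp (σ * κ * (x - z)) * (σ * κ)) x := by
      have := (((hasDerivAt_id x).sub_const z).const_mul (σ * κ)).exp
      simpa using this
    refine ((h.d1 x).fun_mul ((h1.const_mul (2 * κ)⁻¹).mul_const (w z)⁻¹)).congr_deriv ?_
    simp only [g']
    ring
  have hG : ∀ σ x, HasDerivAt (fun x => e x * (g σ x : ℂ))
      (e x * -(Complex.I * ξ) * g σ x + e x * g' σ x) x := by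
    intro σ x
    exact (hed x).mul (hg σ x).ofReal_comp
  have gl : ∀ x, x ≤ z → kerG κ w x z = g 1 x := by
    intro x hx
    simp only [g, kerG]
    rw [abs_of_nonpos (by linarith)]
    congr 4
    ring
  have gr : ∀ x, z ≤ x → kerG κ w x z = g (-1) x := by
    intro x hx
    simp only [g, kerG]
    rw [abs_of_nonneg (by linarith)]
    congr 4
    ring
  have gl' : ∀ x, x < z → kerG' κ w w' x z = g' 1 x := by
    intro x hx
    simp only [g', kerG']
    rw [abs_of_nonpos (by linarith), if_pos hx, one_mul]
    congr 4
    ring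
  have gr' : ∀ x, z < x → kerG' κ w w' x z = g' (-1) x := by
    intro x hx
    simp only [g', kerG']
    rw [abs_of_nonneg (by linarith), if_neg hx.not_gt]
    congr 4
    · ring
    · ring
  have hlim := h.boundG.tendsto_left hκ z
  have hz : ∀ {l : Filter ℝ} {u : ℝ → ℝ}, Filter.Tendsto u l (nhds 0) →
      Filter.Tendsto (fun x => e x * (u x : ℂ)) l (nhds 0) := by
    intro l u hu
    rw [tendsto_zero_iff_norm_tendsto_zero] at hu ⊢
    refine hu.congr fun x => ?_
    rw [norm_mul, hen, one_mul, Complex.norm_real]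
  have key := integral_two_pieces (p := z)
    (m := fun x => (e x * (kerG' κ w w' x z : ℂ)) - Complex.I * ξ * (e x * (kerG κ w x z : ℂ)))
    (hG 1) (hG (-1)) ((hi h.boundG').sub ((hi h.boundG).const_mul _))
    (fun x hx => by simp only [gl' x hx, gl x hx.le]; ring)
    (fun x hx => by simp only [gr' x hx, gr x hx.le]; ring)
    ((hz hlim.2).congr' (by
      filter_upwards [Filter.eventually_le_atBot z] with x hx
      rw [gl x hx]))
    ((hz hlim.1).congr' (by
      filter_upwards [Filter.eventually_ge_atTop z] with x hx
      rw [gr x hx]))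
  rw [integral_sub (hi h.boundG') ((hi h.boundG).const_mul _), integral_const_mul] at key
  have hjump : e z * (g 1 z : ℂ) - e z * (g (-1) z : ℂ) = 0 := by
    simp [g]
  rw [hjump, sub_eq_zero] at key
  unfold fHat
  rw [key, Complex.real_smul, Complex.real_smul]
  ring

lemma fHat_kop_kerG' (h : IsWeight C₀ κ w w' w'') {φ : ℝ → ℂ} (hφ : Integrable φ) (ξ : ℝ) :
    fHat (kop (kerG' κ w w') φ) ξ = Complex.I * ξ * fHat (kop (kerG κ w) φ) ξ := by
  have hκ : 0 < κ / 2 := by linarith [h.hκ]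
  rw [h.boundG'.fHat_kop hκ hφ, h.boundG.fHat_kop hκ hφ, ← integral_const_mul]
  simp only [h.fHat_kerG', mul_assoc]

end IsWeight

/-! ### Fourier transform of the free resolvent and the resolvent identity -/

/-- The Fourier transform of the free resolvent kernel, computed on the two half-lines. -/
lemma fHat_kerG_one {κ : ℝ} (hκ : 0 < κ) (hκ1 : 1 ≤ κ) (ξ y : ℝ) :
    fHat (fun x => (kerG κ 1 x y : ℂ)) ξ = (Real.sqrt (2 * Real.pi))⁻¹ •
      (Complex.exp (-(Complex.I * (ξ : ℂ) * (y : ℂ))) / ((ξ ^ 2 + κ ^ 2 : ℝ) : ℂ)) := by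
  set m : ℝ → ℂ := fun x => Complex.exp (-(Complex.I * (ξ : ℂ) * (x : ℂ))) * (kerG κ 1 x y : ℂ)
    with hm
  have hi : Integrable m := by
    refine ((IsWeight.one hκ1).boundG.integrable_left (half_pos hκ) y).ofReal.bdd_mul (c := 1)
      (Continuous.aestronglyMeasurable (by fun_prop)) (Filter.Eventually.of_forall fun x => ?_)
    rw [Complex.norm_exp]
    simp
  have e1 : ∀ x ∈ Set.Iic y, m x
      = ((2 * κ)⁻¹ * Complex.exp (-(κ * y))) * Complex.exp ((κ - Complex.I * ξ) * x) := by
    intro x hx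
    have hx : x ≤ y := hx
    simp only [hm, kerG]
    rw [abs_of_nonpos (by linarith)]
    push_cast
    simp only [Pi.one_apply, Complex.ofReal_one, inv_one, mul_one, one_mul]
    rw [mul_left_comm, ← Complex.exp_add, mul_assoc (2 * (κ : ℂ))⁻¹, ← Complex.exp_add]
    congr 2
    ring
  have e2 : ∀ x ∈ Set.Ioi y, m x
      = ((2 * κ)⁻¹ * Complex.exp (κ * y)) * Complex.exp ((-κ - Complex.I * ξ) * x) := by
    intro x hx
    have hx : y < x := hx
    simp only [hm, kerG]
    rw [abs_of_nonneg (by linarith)]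
    push_cast
    simp only [Pi.one_apply, Complex.ofReal_one, inv_one, mul_one, one_mul]
    rw [mul_left_comm, ← Complex.exp_add, mul_assoc (2 * (κ : ℂ))⁻¹, ← Complex.exp_add]
    congr 2
    ring
  have n1 : (κ - Complex.I * ξ : ℂ) ≠ 0 := by
    intro h0
    have := congrArg Complex.re h0
    simp at this
    exact hκ.ne' this
  have n2 : (-κ - Complex.I * ξ : ℂ) ≠ 0 := by
    intro h0
    have := congrArg Complex.re h0
    simp at this
    exact hκ.ne' this
  have n3 : ((ξ : ℂ) ^ 2 + (κ : ℂ) ^ 2) ≠ 0 := by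
    have : (0 : ℝ) < ξ ^ 2 + κ ^ 2 := by positivity
    exact_mod_cast this.ne'
  have n4 : (κ : ℂ) ≠ 0 := by exact_mod_cast hκ.ne'
  unfold fHat
  rw [← hm, ← intervalIntegral.integral_Iic_add_Ioi (b := y) hi.integrableOn hi.integrableOn,
    setIntegral_congr_fun measurableSet_Iic e1, setIntegral_congr_fun measurableSet_Ioi e2,
    integral_const_mul, integral_const_mul, integral_exp_mul_complex_Iic (by simpa using hκ),
    integral_exp_mul_complex_Ioi (by simpa using hκ)]
  congr 1
  have x1 : Complex.exp (-(κ * y)) * Complex.exp ((κ - Complex.I * ξ) * y)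
      = Complex.exp (-(Complex.I * ξ * y)) := by
    rw [← Complex.exp_add]
    congr 1
    ring
  have x2 : Complex.exp (κ * y) * Complex.exp ((-κ - Complex.I * ξ) * y)
      = Complex.exp (-(Complex.I * ξ * y)) := by
    rw [← Complex.exp_add]
    congr 1
    ring
  calc _ = (2 * (κ : ℂ))⁻¹ * ((Complex.exp (-(κ * y)) * Complex.exp ((κ - Complex.I * ξ) * y))
          / (κ - Complex.I * ξ)
        - (Complex.exp (κ * y) * Complex.exp ((-κ - Complex.I * ξ) * y))
          / (-κ - Complex.I * ξ)) := by
        push_cast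
        ring
    _ = _ := by
        rw [x1, x2]
        push_cast
        field_simp
        ring_nf
        simp only [Complex.I_sq]
        ring

/-- On the Fourier side the free resolvent divides by `ξ² + κ²`. -/
lemma fHat_kop_kerG_one {κ : ℝ} (hκ : 1 ≤ κ) {f : ℝ → ℂ} (hf : Integrable f) (ξ : ℝ) :
    fHat (kop (kerG κ 1) f) ξ = fHat f ξ / ((ξ ^ 2 + κ ^ 2 : ℝ) : ℂ) := by
  have h0 : 0 < κ := by linarith
  rw [(IsWeight.one hκ).boundG.fHat_kop (half_pos h0) hf]
  simp only [fHat_kerG_one h0 hκ]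
  rw [fHat, smul_div_assoc, ← integral_div, ← integral_smul]
  refine integral_congr_ae (Filter.Eventually.of_forall fun y => ?_)
  simp only
  rw [smul_mul_assoc, div_mul_eq_mul_div]

/-- Green's identity behind the second resolvent identity
`w R₀ (1/w) = R₀ - w R₀ (1/w) ∘ [w (-∂² + κ²) (1/w) - (-∂² + κ²)] R₀`, at the level of kernels. -/
lemma IsWeight.kerG_eq {C₀ κ : ℝ} {w w' w'' : ℝ → ℝ} (h : IsWeight C₀ κ w w' w'') {x y : ℝ}
    (hxy : x ≠ y) :
    kerG κ w x y = kerG κ 1 x y - ∫ z, kerG κ w x z * kerM κ w w' w'' z y := by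
  have h0 : 0 < κ := by linarith [h.hκ]
  have hκ : 0 < κ / 2 := half_pos h0
  have hw := fun z => (h.pos z).ne'
  -- On each side of the points `x`, `y` the integrand is an exact derivative of one of these,
  -- with `σ`, `τ` the signs of the exponents of the two resolvent kernels.
  let Ψ : ℝ → ℝ → ℝ → ℝ := fun σ τ z => (w' z / w z - (σ + τ) * κ) / w z *
    (w x * (2 * κ)⁻¹ * (2 * κ)⁻¹ * Real.exp (σ * κ * (x - z) + τ * κ * (z - y)))
  let Ψ' : ℝ → ℝ → ℝ → ℝ := fun σ τ z =>
    (2 * (w' z / w z) * (τ * κ) + (w'' z / w z - 2 * (w' z / w z) ^ 2)) / w z *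
    (w x * (2 * κ)⁻¹ * (2 * κ)⁻¹ * Real.exp (σ * κ * (x - z) + τ * κ * (z - y)))
  have hΨ : ∀ σ τ : ℝ, σ ^ 2 = 1 → τ ^ 2 = 1 → ∀ z, HasDerivAt (Ψ σ τ) (Ψ' σ τ z) z := by
    intro σ τ hσ hτ z
    have h1 : HasDerivAt (fun z => Real.exp (σ * κ * (x - z) + τ * κ * (z - y)))
        (Real.exp (σ * κ * (x - z) + τ * κ * (z - y)) * (-(σ * κ) + τ * κ)) z := by
      have := ((((hasDerivAt_id z).const_sub x).const_mul (σ * κ)).fun_add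
        (((hasDerivAt_id z).sub_const y).const_mul (τ * κ))).exp
      simpa using this
    have h2 := ((((h.d2 z).fun_div (h.d1 z) (hw z)).sub_const ((σ + τ) * κ)).fun_div
      (h.d1 z) (hw z)).fun_mul (h1.const_mul (w x * (2 * κ)⁻¹ * (2 * κ)⁻¹))
    refine h2.congr_deriv ?_
    simp only [Ψ']
    have hz := hw z
    field_simp
    linear_combination (w x * κ ^ 2 * (w z) ^ 2 * (hσ - hτ))
  have hm : Integrable (fun z => kerG κ w x z * kerM κ w w' w'' z y) := by
    refine (h.boundM.integrable_left hκ y).bdd_mul (c := C₀ / (2 * κ))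
      (h.boundG.meas.comp measurable_prodMk_left).aestronglyMeasurable
      (Filter.Eventually.of_forall fun z => h.boundG.bound' hκ x z)
  have form : ∀ σ τ z : ℝ, |x - z| = -(σ * (x - z)) → |z - y| = -(τ * (z - y)) →
      (if z < y then κ else -κ) = τ * κ →
      kerG κ w x z * kerM κ w w' w'' z y = Ψ' σ τ z := by
    intro σ τ z h1 h2 h3
    simp only [Ψ', kerM, kerG, kerG', Pi.one_apply, Pi.zero_apply]
    rw [h1, h2, h3, Real.exp_add]
    rw [show -κ * -(σ * (x - z)) = σ * κ * (x - z) by ring,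
      show -κ * -(τ * (z - y)) = τ * κ * (z - y) by ring]
    ring
  have formΨ : ∀ σ τ z : ℝ, |x - z| = -(σ * (x - z)) → |z - y| = -(τ * (z - y)) → σ + τ = 0 →
      (w' z / w z) * kerG κ w x z * kerG κ 1 z y = Ψ σ τ z := by
    intro σ τ z h1 h2 h3
    simp only [Ψ, kerG, Pi.one_apply]
    rw [h1, h2, h3, Real.exp_add]
    rw [show -κ * -(σ * (x - z)) = σ * κ * (x - z) by ring,
      show -κ * -(τ * (z - y)) = τ * κ * (z - y) by ring]
    ring
  have hlim : ∀ l : Filter ℝ, Filter.Tendsto (fun z => kerG κ 1 z y) l (nhds 0) →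
      Filter.Tendsto (fun z => (w' z / w z) * kerG κ w x z * kerG κ 1 z y) l (nhds 0) := by
    intro l hl
    refine squeeze_zero_norm (a := fun z => C₀ * (C₀ / (2 * κ)) * |kerG κ 1 z y|) (fun z => ?_) ?_
    · rw [norm_mul, norm_mul]
      have := h.C_pos
      exact mul_le_mul_of_nonneg_right (mul_le_mul (h.abs_a_le z) (h.boundG.bound' hκ x z)
        (norm_nonneg _) this.le) (norm_nonneg _)
    · have := hl.abs.const_mul (C₀ * (C₀ / (2 * κ)))
      simpa using this
  have hlims := (IsWeight.one h.hκ).boundG.tendsto_left hκ y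
  have lA : Filter.Tendsto (Ψ (-1) 1) Filter.atBot (nhds 0) := by
    refine (hlim _ hlims.2).congr' ?_
    filter_upwards [Filter.eventually_le_atBot x, Filter.eventually_le_atBot y] with z hzx hzy
    exact formΨ _ _ z (by rw [abs_of_nonneg (by linarith)]; ring)
      (by rw [abs_of_nonpos (by linarith)]; ring) (by norm_num)
  have lB : Filter.Tendsto (Ψ 1 (-1)) Filter.atTop (nhds 0) := by
    refine (hlim _ hlims.1).congr' ?_
    filter_upwards [Filter.eventually_ge_atTop x, Filter.eventually_ge_atTop y] with z hzx hzy
    exact formΨ _ _ z (by rw [abs_of_nonpos (by linarith)]; ring)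
      (by rw [abs_of_nonneg (by linarith)]; ring) (by norm_num)
  have hA := hΨ (-1) 1 (by norm_num) (by norm_num)
  have hB := hΨ 1 (-1) (by norm_num) (by norm_num)
  have hx := hw x
  have hy := hw y
  rcases lt_or_gt_of_ne hxy with hlt | hlt
  · rw [integral_three_pieces hlt.le hA (hΨ 1 1 (by norm_num) (by norm_num)) hB hm
      (fun z hz => form _ _ z (by rw [abs_of_nonneg (by linarith)]; ring)
        (by rw [abs_of_nonpos (by linarith)]; ring) (by rw [if_pos (by linarith)]; ring))
      (fun z hz hz' => form _ _ z (by rw [abs_of_nonpos (by linarith)]; ring)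
        (by rw [abs_of_nonpos (by linarith)]; ring) (by rw [if_pos (by linarith)]; ring))
      (fun z hz => form _ _ z (by rw [abs_of_nonpos (by linarith)]; ring)
        (by rw [abs_of_nonneg (by linarith)]; ring) (by rw [if_neg (by linarith)]; ring))
      lA lB]
    simp only [Ψ, kerG, Pi.one_apply]
    rw [abs_of_nonpos (by linarith)]
    simp only [sub_self, mul_zero, zero_add, add_zero, one_mul, neg_mul, mul_neg, neg_neg]
    field_simp
    ring
  · rw [integral_three_pieces hlt.le hA (hΨ (-1) (-1) (by norm_num) (by norm_num)) hB hm
      (fun z hz => form _ _ z (by rw [abs_of_nonneg (by linarith)]; ring)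
        (by rw [abs_of_nonpos (by linarith)]; ring) (by rw [if_pos (by linarith)]; ring))
      (fun z hz hz' => form _ _ z (by rw [abs_of_nonneg (by linarith)]; ring)
        (by rw [abs_of_nonneg (by linarith)]; ring) (by rw [if_neg (by linarith)]; ring))
      (fun z hz => form _ _ z (by rw [abs_of_nonpos (by linarith)]; ring)
        (by rw [abs_of_nonneg (by linarith)]; ring) (by rw [if_neg (by linarith)]; ring))
      lA lB]
    simp only [Ψ, kerG, Pi.one_apply]
    rw [abs_of_nonneg (by linarith)]
    simp only [sub_self, mul_zero, zero_add, add_zero, one_mul, neg_mul]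
    field_simp
    ring

/-! ### The Sobolev bound -/

lemma weightedResolventApply_eq_kop (κ : ℝ) (w : ℝ → ℝ) (f : ℝ → ℂ) :
    weightedResolventApply κ w f = kop (kerG κ w) f := by
  funext x
  simp only [weightedResolventApply, kop, kerG, ← integral_const_mul]
  refine integral_congr_ae (Filter.Eventually.of_forall fun y => ?_)
  push_cast
  ring

lemma fHat_sub {u v : ℝ → ℂ} (hu : Integrable u) (hv : Integrable v) (ξ : ℝ) :
    fHat (fun x => u x - v x) ξ = fHat u ξ - fHat v ξ := by
  have key : ∀ {u : ℝ → ℂ}, Integrable u →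
      Integrable (fun x : ℝ => Complex.exp (-(Complex.I * (ξ : ℂ) * (x : ℂ))) * u x) := by
    intro u hu
    refine hu.bdd_mul (c := 1) (Continuous.aestronglyMeasurable (by fun_prop))
      (Filter.Eventually.of_forall fun x => ?_)
    rw [Complex.norm_exp]
    simp
  simp only [fHat, mul_sub]
  rw [integral_sub (key hu) (key hv), smul_sub]

/-- if `w > 0` satisfies `|w'| + |w''| ≤ C₀ w` and
`w(y)/w(x) ≤ C₀ e^{|x-y|/2}`, then `w R₀(κ) (1/w)` maps `H^{-1}_κ` boundedly to `H¹_κ`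
with norm `≲ 1` uniformly for `κ ≥ 1`. -/
theorem stmt18 (C₀ : ℝ) (hC₀ : 0 < C₀) :
    ∃ C > 0, ∀ κ : ℝ, 1 ≤ κ →
      ∀ w w' w'' : ℝ → ℝ, (∀ x, 0 < w x) →
      (∀ x, HasDerivAt w (w' x) x) → (∀ x, HasDerivAt w' (w'' x) x) →
      (∀ x, |w' x| + |w'' x| ≤ C₀ * w x) →
      (∀ x y, w y / w x ≤ C₀ * Real.exp (|x - y| / 2)) →
      ∀ f : ℝ → ℂ, Integrable f →
      Integrable (fun ξ : ℝ => ‖fHat f ξ‖ ^ 2 * (ξ ^ 2 + 4 * κ ^ 2) ^ (-1 : ℝ)) →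
      sobNormK 1 κ (weightedResolventApply κ w f) ≤ C * sobNormK (-1) κ f := by
  set B : ℝ := 2 * (2 * C₀) ^ 2 + 2 * (C₀ + 2 * C₀ ^ 2) ^ 2 with hB
  set K : ℝ := 32 + 2 * ((4 * ((C₀ + 1) * C₀)) ^ 2 + 16 * C₀ ^ 2) * (4 * B) with hK
  refine ⟨Real.sqrt K, by positivity, ?_⟩
  intro κ hκ w w' w'' hpos hd1 hd2 hbd hratio f hf hfS
  have h : IsWeight C₀ κ w w' w'' := ⟨hκ, hpos, hd1, hd2, hbd, hratio⟩
  have h1 := IsWeight.one hκ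
  have κ0 : 0 < κ := by linarith
  have hκ2 : 0 < κ / 2 := half_pos κ0
  set S : ℝ := ∫ ξ : ℝ, ‖fHat f ξ‖ ^ 2 * (ξ ^ 2 + 4 * κ ^ 2) ^ (-1 : ℝ) with hS
  have hSeq : ∀ ξ : ℝ, (ξ ^ 2 + 4 * κ ^ 2) ^ (-1 : ℝ) = (ξ ^ 2 + 4 * κ ^ 2)⁻¹ := fun ξ =>
    Real.rpow_neg_one _
  -- `F = R₀ f` and `F' = ∂F`, `q = [w (-∂² + κ²) (1/w) - (-∂² + κ²)] F`, and
  -- `H = w R₀ (1/w) q` and `D = ∂H`.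
  set F := kop (kerG κ 1) f with hF
  set F' := kop (kerG' κ 1 0) f with hF'
  set q := kop (kerM κ w w' w'') f with hq
  set H := kop (kerG κ w) q with hH
  set D := kop (kerG' κ w w') q with hD
  have iF : Integrable F := h1.boundG.integrable_kop hκ2 hf
  have mF : MemLp F 2 := h1.boundG.memLp_kop hκ2 hf
  have iF' : Integrable F' := h1.boundG'.integrable_kop hκ2 hf
  have mF' : MemLp F' 2 := h1.boundG'.memLp_kop hκ2 hf
  have iq : Integrable q := h.boundM.integrable_kop hκ2 hf
  have mq : MemLp q 2 := h.boundM.memLp_kop hκ2 hf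
  have iH : Integrable H := h.boundG.integrable_kop hκ2 iq
  have mH : MemLp H 2 := h.boundG.memLp_kop hκ2 iq
  have iD : Integrable D := h.boundG'.integrable_kop hκ2 iq
  have mD : MemLp D 2 := h.boundG'.memLp_kop hκ2 iq
  have hg : weightedResolventApply κ w f = fun x => F x - H x := by
    rw [weightedResolventApply_eq_kop]
    funext x
    rw [hH, hq, h.boundG.kop_kop hκ2 h.boundM hκ2 hf, hF]
    have i1 := h1.boundG.integrable_section hκ2 hf x
    have i0 := h.boundG.integrable_section hκ2 hf x
    have hne : ∀ᵐ y : ℝ, y ≠ x := by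
      rw [ae_iff]
      simp
    have hae : (fun y => ((∫ z, kerG κ w x z * kerM κ w w' w'' z y : ℝ) : ℂ) * f y)
        =ᵐ[volume] fun y => (kerG κ 1 x y : ℂ) * f y - (kerG κ w x y : ℂ) * f y := by
      filter_upwards [hne] with y hy
      rw [h.kerG_eq hy.symm]
      push_cast
      ring
    rw [integral_congr_ae hae, integral_sub i1 i0]
    simp only [kop]
    ring
  have nF : ∀ ξ, ‖fHat F ξ‖ ^ 2 = ‖fHat f ξ‖ ^ 2 / (ξ ^ 2 + κ ^ 2) ^ 2 := by
    intro ξ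
    rw [hF, fHat_kop_kerG_one hκ hf, norm_div, Complex.norm_real, div_pow, Real.norm_eq_abs,
      sq_abs]
  have nF' : ∀ ξ, ‖fHat F' ξ‖ ^ 2 = ξ ^ 2 * ‖fHat F ξ‖ ^ 2 := by
    intro ξ
    rw [hF', h1.fHat_kop_kerG' hf, norm_mul, norm_mul, Complex.norm_I, Complex.norm_real, one_mul,
      mul_pow, Real.norm_eq_abs, sq_abs]
  have nD : ∀ ξ, ‖fHat D ξ‖ ^ 2 = ξ ^ 2 * ‖fHat H ξ‖ ^ 2 := by
    intro ξ
    rw [hD, h.fHat_kop_kerG' iq, norm_mul, norm_mul, Complex.norm_I, Complex.norm_real, one_mul,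
      mul_pow, Real.norm_eq_abs, sq_abs]
  have pF := fHat_plancherel iF mF
  have pF' := fHat_plancherel iF' mF'
  have pH := fHat_plancherel iH mH
  have pD := fHat_plancherel iD mD
  have bF : (∫ x, ‖F' x‖ ^ 2) + ∫ x, ‖F x‖ ^ 2 ≤ 4 * S := by
    rw [← pF.2, ← pF'.2, ← integral_add pF'.1 pF.1, hS, ← integral_const_mul]
    refine integral_mono (pF'.1.add pF.1) (hfS.const_mul 4) fun ξ => ?_
    simp only [hSeq, nF', nF]
    have hN : 0 ≤ ‖fHat f ξ‖ ^ 2 := by positivity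
    have hc : (ξ ^ 2 + 1) / (ξ ^ 2 + κ ^ 2) ^ 2 ≤ 4 * (ξ ^ 2 + 4 * κ ^ 2)⁻¹ := by
      rw [← div_eq_mul_inv, div_le_div_iff₀ (by positivity) (by positivity)]
      have hk1 : 1 ≤ κ ^ 2 := one_le_pow₀ hκ
      have hx := sq_nonneg ξ
      calc (ξ ^ 2 + 1) * (ξ ^ 2 + 4 * κ ^ 2) ≤ (ξ ^ 2 + κ ^ 2) * (4 * (ξ ^ 2 + κ ^ 2)) := by
            gcongr
            linarith
        _ = _ := by ring
    calc _ = ‖fHat f ξ‖ ^ 2 * ((ξ ^ 2 + 1) / (ξ ^ 2 + κ ^ 2) ^ 2) := by ring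
      _ ≤ ‖fHat f ξ‖ ^ 2 * (4 * (ξ ^ 2 + 4 * κ ^ 2)⁻¹) := by gcongr
      _ = _ := by ring
  have qeq : ∀ x, q x = 2 * ((w' x / w x : ℝ) : ℂ) * F' x
      + ((w'' x / w x - 2 * (w' x / w x) ^ 2 : ℝ) : ℂ) * F x := by
    intro x
    simp only [hq, hF, hF', kop]
    rw [← integral_const_mul, ← integral_const_mul, ← integral_add
      ((h1.boundG'.integrable_section hκ2 hf x).const_mul _)
      ((h1.boundG.integrable_section hκ2 hf x).const_mul _)]
    refine integral_congr_ae (Filter.Eventually.of_forall fun y => ?_)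
    simp only [kerM]
    push_cast
    ring
  have bq : ∫ x, ‖q x‖ ^ 2 ≤ 4 * B * S := by
    have i2 : ∀ {u : ℝ → ℂ}, MemLp u 2 → Integrable (fun x => ‖u x‖ ^ 2) := fun hu =>
      hu.integrable_norm_pow (by norm_num)
    have : ∫ x, ‖q x‖ ^ 2 ≤ ∫ x, B * (‖F' x‖ ^ 2 + ‖F x‖ ^ 2) := by
      refine integral_mono (i2 mq) (((i2 mF').add (i2 mF)).const_mul B) fun x => ?_
      simp only
      have hn : ‖q x‖ ≤ 2 * C₀ * ‖F' x‖ + (C₀ + 2 * C₀ ^ 2) * ‖F x‖ := by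
        rw [qeq]
        refine (norm_add_le _ _).trans ?_
        rw [norm_mul, norm_mul, norm_mul, Complex.norm_real, Complex.norm_real]
        have e1 := h.abs_a_le x
        have e2 := h.abs_b_le x
        rw [Real.norm_eq_abs, Real.norm_eq_abs, Complex.norm_two]
        gcongr
      have s1 := pow_le_pow_left₀ (norm_nonneg _) hn 2
      have s2 := two_mul_le_add_sq (2 * C₀ * ‖F' x‖) ((C₀ + 2 * C₀ ^ 2) * ‖F x‖)
      have t1 : 0 ≤ (2 * C₀) ^ 2 * ‖F x‖ ^ 2 := by positivity
      have t2 : 0 ≤ (C₀ + 2 * C₀ ^ 2) ^ 2 * ‖F' x‖ ^ 2 := by positivity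
      rw [hB]
      nlinarith
    rw [integral_const_mul, integral_add (i2 mF') (i2 mF)] at this
    have hB0 : 0 ≤ B := by positivity
    nlinarith [mul_le_mul_of_nonneg_left bF hB0]
  have hQ0 : 0 ≤ ∫ x, ‖q x‖ ^ 2 := integral_nonneg fun x => by positivity
  have bH : 4 * κ ^ 2 * ∫ x, ‖H x‖ ^ 2 ≤ 16 * C₀ ^ 2 * ∫ x, ‖q x‖ ^ 2 := by
    have := h.boundG.integral_sq_kop_le hκ2 iq mq
    calc 4 * κ ^ 2 * ∫ x, ‖H x‖ ^ 2
        ≤ 4 * κ ^ 2 * ((2 * (C₀ / (2 * κ)) / (κ / 2)) ^ 2 * ∫ x, ‖q x‖ ^ 2) := by gcongr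
      _ = (16 * C₀ ^ 2 * ∫ x, ‖q x‖ ^ 2) / κ ^ 2 := by
          field_simp
          ring
      _ ≤ _ := div_le_self (by positivity) (one_le_pow₀ hκ)
  have bD : ∫ x, ‖D x‖ ^ 2 ≤ (4 * ((C₀ + 1) * C₀)) ^ 2 * ∫ x, ‖q x‖ ^ 2 := by
    refine (h.boundG'.integral_sq_kop_le hκ2 iq mq).trans ?_
    have : 2 * ((C₀ + 1) * C₀) / (κ / 2) ≤ 4 * ((C₀ + 1) * C₀) := by
      rw [div_le_iff₀ hκ2]
      nlinarith [mul_pos (by linarith : 0 < C₀ + 1) hC₀]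
    gcongr
  have main : ∫ ξ : ℝ, ‖fHat (weightedResolventApply κ w f) ξ‖ ^ 2 * (ξ ^ 2 + 4 * κ ^ 2) ^ (1 : ℝ)
      ≤ K * S := by
    have hmono : ∫ ξ : ℝ, ‖fHat (weightedResolventApply κ w f) ξ‖ ^ 2
          * (ξ ^ 2 + 4 * κ ^ 2) ^ (1 : ℝ)
        ≤ ∫ ξ : ℝ, (32 * (‖fHat f ξ‖ ^ 2 * (ξ ^ 2 + 4 * κ ^ 2) ^ (-1 : ℝ))
          + 2 * (‖fHat D ξ‖ ^ 2 + 4 * κ ^ 2 * ‖fHat H ξ‖ ^ 2)) := by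
      refine integral_mono_of_nonneg (Filter.Eventually.of_forall fun ξ => by positivity)
        ((hfS.const_mul 32).add ((pD.1.add (pH.1.const_mul _)).const_mul 2))
        (Filter.Eventually.of_forall fun ξ => ?_)
      simp only [hSeq, Real.rpow_one, nD]
      rw [hg, fHat_sub iF iH]
      have t1 : ‖fHat F ξ - fHat H ξ‖ ^ 2 ≤ 2 * ‖fHat F ξ‖ ^ 2 + 2 * ‖fHat H ξ‖ ^ 2 := by
        have s1 := pow_le_pow_left₀ (norm_nonneg _) (norm_sub_le (fHat F ξ) (fHat H ξ)) 2
        have s2 := two_mul_le_add_sq ‖fHat F ξ‖ ‖fHat H ξ‖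
        nlinarith
      have hc : (ξ ^ 2 + 4 * κ ^ 2) / (ξ ^ 2 + κ ^ 2) ^ 2 ≤ 16 * (ξ ^ 2 + 4 * κ ^ 2)⁻¹ := by
        rw [← div_eq_mul_inv, div_le_div_iff₀ (by positivity) (by positivity)]
        have hx := sq_nonneg ξ
        calc (ξ ^ 2 + 4 * κ ^ 2) * (ξ ^ 2 + 4 * κ ^ 2)
            ≤ (4 * (ξ ^ 2 + κ ^ 2)) * (4 * (ξ ^ 2 + κ ^ 2)) := by
              gcongr <;> linarith
          _ = _ := by ring
      calc ‖fHat F ξ - fHat H ξ‖ ^ 2 * (ξ ^ 2 + 4 * κ ^ 2)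
          ≤ (2 * ‖fHat F ξ‖ ^ 2 + 2 * ‖fHat H ξ‖ ^ 2) * (ξ ^ 2 + 4 * κ ^ 2) := by gcongr
        _ = 2 * (‖fHat f ξ‖ ^ 2 * ((ξ ^ 2 + 4 * κ ^ 2) / (ξ ^ 2 + κ ^ 2) ^ 2))
            + 2 * (ξ ^ 2 * ‖fHat H ξ‖ ^ 2 + 4 * κ ^ 2 * ‖fHat H ξ‖ ^ 2) := by
              rw [nF]
              ring
        _ ≤ 2 * (‖fHat f ξ‖ ^ 2 * (16 * (ξ ^ 2 + 4 * κ ^ 2)⁻¹))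
            + 2 * (ξ ^ 2 * ‖fHat H ξ‖ ^ 2 + 4 * κ ^ 2 * ‖fHat H ξ‖ ^ 2) := by gcongr
        _ = _ := by ring
    refine hmono.trans ?_
    have iDH : Integrable (fun ξ => ‖fHat D ξ‖ ^ 2 + 4 * κ ^ 2 * ‖fHat H ξ‖ ^ 2) :=
      pD.1.add (pH.1.const_mul _)
    rw [integral_add (hfS.const_mul 32) (iDH.const_mul 2), integral_const_mul, integral_const_mul,
      integral_add pD.1 (pH.1.const_mul _), integral_const_mul, pD.2, pH.2, ← hS]
    have hfin := mul_le_mul_of_nonneg_left bq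
      (by positivity : 0 ≤ 2 * ((4 * ((C₀ + 1) * C₀)) ^ 2 + 16 * C₀ ^ 2))
    rw [hK]
    linarith
  unfold sobNormK
  rw [← hS, ← Real.sqrt_mul (by positivity)]
  exact Real.sqrt_le_sqrt main
end
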